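/- arXiv:2007.02814 — 5 statements merged into one kernel-verified Lean document; each statement's English description precedes it below -/
import Mathlib

section
/- For every real δ ≥ 1, setting γ_δ = ((σ_m^{−1}−1)+ρ_n^{−1}δ)/(σ_m^{−1}+(ρ_n^{−1}−1)δ), one has: if ψ̲_1(Λ*(Θ), μ*(δ)) ≤ 1 − δ then ψ̲_1(Λ(Θ), μ(γ_δ)) ≤ 1 − γ_δ. -/
open Filter

noncomputable section

/-- The weighted norm `|x|_w = max_j |x_j|^(1/w_j)`. -/
def wnorm {k : ℕ} (w : Fin k → ℝ) (x : Fin k → ℝ) : ℝ := ⨆ j, |x j| ^ ((1 : ℝ) / w j)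

/-- The lattice `Λ(Θ) = {(x, y − Θx) : x ∈ ℤ^m, y ∈ ℤ^n} ⊂ ℝ^(m+n)`. -/
def latt (m n : ℕ) (Θ : Matrix (Fin n) (Fin m) ℝ) : Set (Fin (m + n) → ℝ) :=
  {v | ∃ (x : Fin m → ℤ) (y : Fin n → ℤ),
    v = Fin.append (fun j => (x j : ℝ))
      (fun i => (y i : ℝ) - Θ.mulVec (fun j => (x j : ℝ)) i)}

/-- The dual lattice `Λ*(Θ) = {(x + ᵀΘy, y) : x ∈ ℤ^m, y ∈ ℤ^n} ⊂ ℝ^(m+n)`. -/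
def lattDual (m n : ℕ) (Θ : Matrix (Fin n) (Fin m) ℝ) : Set (Fin (m + n) → ℝ) :=
  {v | ∃ (x : Fin m → ℤ) (y : Fin n → ℤ),
    v = Fin.append (fun j => (x j : ℝ) + Θ.transpose.mulVec (fun i => (y i : ℝ)) j)
      (fun i => (y i : ℝ))}

/-- `e₁ = (1−dσ₁, …, 1−dσ_m, 1, …, 1)` with `n` trailing ones, `d = m + n`. -/
def eOne (m n : ℕ) (σ : Fin m → ℝ) : Fin (m + n) → ℝ :=
  Fin.append (fun j => 1 - ((m + n : ℕ) : ℝ) * σ j) (fun _ => 1)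

/-- `e₂ = (1, …, 1, 1−dρ_n, …, 1−dρ₁)` with `m` leading ones, `d = m + n`. -/
def eTwo (m n : ℕ) (ρ : Fin n → ℝ) : Fin (m + n) → ℝ :=
  Fin.append (fun _ => (1 : ℝ)) (fun i => 1 - ((m + n : ℕ) : ℝ) * ρ i.rev)

/-- `μ(γ) = −e₁ + γ e₂`. -/
def muGamma (m n : ℕ) (σ : Fin m → ℝ) (ρ : Fin n → ℝ) (γ : ℝ) : Fin (m + n) → ℝ :=
  -eOne m n σ + γ • eTwo m n ρ

/-- `μ*(δ) = δ e₁ − e₂`. -/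
def muStar (m n : ℕ) (σ : Fin m → ℝ) (ρ : Fin n → ℝ) (δ : ℝ) : Fin (m + n) → ℝ :=
  δ • eOne m n σ - eTwo m n ρ

/-- The `k`-th successive minimum `λ_k(B_τ, Λ)` of the box
`B_τ = {z : |z_i| ≤ exp (τ i)}` with respect to the lattice `Λ`. -/
def succMin (d : ℕ) (Λ : Set (Fin d → ℝ)) (τ : Fin d → ℝ) (k : ℕ) : ℝ :=
  sInf {lam : ℝ | 0 < lam ∧ ∃ v : Fin k → (Fin d → ℝ),
    (∀ l, v l ∈ Λ) ∧ LinearIndependent ℝ v ∧ ∀ l i, |v l i| ≤ lam * Real.exp (τ i)}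

/-- `L_k(Λ, τ) = log λ_k(B_τ, Λ)`. -/
def Lk (d : ℕ) (Λ : Set (Fin d → ℝ)) (τ : Fin d → ℝ) (k : ℕ) : ℝ :=
  Real.log (succMin d Λ τ k)

/-- `S_k(Λ, τ) = L_1(Λ, τ) + ⋯ + L_k(Λ, τ)`. -/
def Sk (d : ℕ) (Λ : Set (Fin d → ℝ)) (τ : Fin d → ℝ) (k : ℕ) : ℝ :=
  ∑ j ∈ Finset.Icc 1 k, Lk d Λ τ j

/-- Schmidt–Summerer lower exponent of the first type:
`ψ̲_k(Λ, μ) = liminf_{s→+∞} L_k(Λ, sμ)/s`. -/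
def psiLow (d : ℕ) (Λ : Set (Fin d → ℝ)) (μ : Fin d → ℝ) (k : ℕ) : ℝ :=
  liminf (fun s : ℝ => Lk d Λ (s • μ) k / s) atTop

/-- Schmidt–Summerer upper exponent of the first type:
`ψ̄_k(Λ, μ) = limsup_{s→+∞} L_k(Λ, sμ)/s`. -/
def psiUp (d : ℕ) (Λ : Set (Fin d → ℝ)) (μ : Fin d → ℝ) (k : ℕ) : ℝ :=
  limsup (fun s : ℝ => Lk d Λ (s • μ) k / s) atTop

/-- Schmidt–Summerer lower exponent of the second type:
`Ψ̲_k(Λ, μ) = liminf_{s→+∞} S_k(Λ, sμ)/s`. -/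
def PsiLow (d : ℕ) (Λ : Set (Fin d → ℝ)) (μ : Fin d → ℝ) (k : ℕ) : ℝ :=
  liminf (fun s : ℝ => Sk d Λ (s • μ) k / s) atTop

/-- Schmidt–Summerer upper exponent of the second type:
`Ψ̄_k(Λ, μ) = limsup_{s→+∞} S_k(Λ, sμ)/s`. -/
def PsiUp (d : ℕ) (Λ : Set (Fin d → ℝ)) (μ : Fin d → ℝ) (k : ℕ) : ℝ :=
  limsup (fun s : ℝ => Sk d Λ (s • μ) k / s) atTop

/-- The system `|x|_σ ≤ t`, `|Θx − y|_ρ ≤ t^(−γ)` admits `k` linearly independent integer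
solutions. -/
def solvK {m n : ℕ} (Θ : Matrix (Fin n) (Fin m) ℝ) (σ : Fin m → ℝ) (ρ : Fin n → ℝ)
    (k : ℕ) (γ t : ℝ) : Prop :=
  ∃ v : Fin k → (Fin m → ℤ) × (Fin n → ℤ), LinearIndependent ℤ v ∧
    ∀ l, wnorm σ (fun j => ((v l).1 j : ℝ)) ≤ t ∧
      wnorm ρ (fun i => Θ.mulVec (fun j => ((v l).1 j : ℝ)) i - ((v l).2 i : ℝ)) ≤ t ^ (-γ)

/-- The `k`-th weighted Diophantine exponent `ω^(k)_{σ,ρ}(Θ)`. -/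
def omegaK {m n : ℕ} (Θ : Matrix (Fin n) (Fin m) ℝ) (σ : Fin m → ℝ) (ρ : Fin n → ℝ)
    (k : ℕ) : EReal :=
  sSup (Real.toEReal '' {γ : ℝ | ∀ T : ℝ, ∃ t > T, solvK Θ σ ρ k γ t})

/-- The `k`-th weighted uniform Diophantine exponent `ω̂^(k)_{σ,ρ}(Θ)`. -/
def omegaHatK {m n : ℕ} (Θ : Matrix (Fin n) (Fin m) ℝ) (σ : Fin m → ℝ) (ρ : Fin n → ℝ)
    (k : ℕ) : EReal :=
  sSup (Real.toEReal '' {γ : ℝ | ∃ T : ℝ, ∀ t > T, solvK Θ σ ρ k γ t})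

open MeasureTheory in
/-- Minkowski's linear forms theorem. -/
lemma minkowski_lin {ι : Type} [Fintype ι] [DecidableEq ι] (M : Matrix ι ι ℝ) (hM : M.det ≠ 0)
    (a : ι → ℝ) (ha : ∀ i, 0 < a i) (h : |M.det| < ∏ i, a i) :
    ∃ p : ι → ℤ, p ≠ 0 ∧ ∀ i, |M.mulVec (fun j => (p j : ℝ)) i| < a i := by
  have hdet : LinearMap.det (Matrix.toLin' M) ≠ 0 := by rwa [LinearMap.det_toLin']
  set S : Set (ι → ℝ) := (Matrix.toLin' M) ⁻¹' (Set.univ.pi fun i => Set.Ioo (-a i) (a i)) with hS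
  have hfd := ZSpan.isAddFundamentalDomain' (Pi.basisFun ℝ ι) (volume : Measure (ι → ℝ))
  have hvF : volume (ZSpan.fundamentalDomain (Pi.basisFun ℝ ι)) = 1 := by
    rw [ZSpan.fundamentalDomain_pi_basisFun, Real.volume_pi_Ico]
    simp
  have hvS : volume S = ENNReal.ofReal (|M.det|⁻¹ * ∏ i, (2 * a i)) := by
    rw [hS, Measure.addHaar_preimage_linearMap _ hdet, Real.volume_pi_Ioo,
      LinearMap.det_toLin', abs_inv, ENNReal.ofReal_mul (by positivity),
      ENNReal.ofReal_prod_of_nonneg (fun i _ => by have := ha i; positivity)]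
    congr 1
    apply Finset.prod_congr rfl
    intro i _
    congr 1
    ring
  have hpos : 0 < |M.det| := abs_pos.mpr hM
  have : Countable (Submodule.span ℤ (Set.range (Pi.basisFun ℝ ι))).toAddSubgroup :=
    inferInstanceAs (Countable (Submodule.span ℤ (Set.range (Pi.basisFun ℝ ι))))
  obtain ⟨x, hx0, hxS⟩ := exists_ne_zero_mem_lattice_of_measure_mul_two_pow_lt_measure
    (μ := (volume : Measure (ι → ℝ))) (s := S) hfd
    (by
      intro x hx
      simp only [hS, Set.mem_preimage, Set.mem_pi, Set.mem_univ, true_imp_iff, Set.mem_Ioo] at hx ⊢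
      intro i
      have := hx i
      rw [map_neg, Pi.neg_apply]
      constructor <;> linarith [this.1, this.2])
    ((convex_pi (fun i _ => convex_Ioo _ _)).linear_preimage _)
    (by
      rw [hvF, hvS, one_mul, Module.finrank_fintype_fun_eq_card]
      have : (2 : ENNReal) ^ Fintype.card ι = ENNReal.ofReal (2 ^ Fintype.card ι) := by
        rw [ENNReal.ofReal_pow (by norm_num)]
        simp
      rw [this]
      apply (ENNReal.ofReal_lt_ofReal_iff_of_nonneg (by positivity)).mpr
      rw [Finset.prod_mul_distrib, Finset.prod_const, Finset.card_univ]
      rw [inv_mul_eq_div, lt_div_iff₀ hpos]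
      exact mul_lt_mul_of_pos_left h (by positivity))
  have hxm : (x : ι → ℝ) ∈ Submodule.span ℤ (Set.range (Pi.basisFun ℝ ι)) := x.2
  rw [Module.Basis.mem_span_iff_repr_mem] at hxm
  choose p hp using hxm
  have hp' : (fun j => (p j : ℝ)) = (x : ι → ℝ) := by
    funext j
    simpa using hp j
  refine ⟨p, ?_, ?_⟩
  · rintro rfl
    apply hx0
    apply Subtype.ext
    rw [← hp']
    funext j
    simp
  · intro i
    rw [hp', abs_lt]
    simp only [hS, Set.mem_preimage, Set.mem_pi, Set.mem_univ, true_imp_iff, Set.mem_Ioo,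
      Matrix.toLin'_apply] at hxS
    exact hxS i

/-- Mahler's transference principle, sum-indexed version. -/
lemma mahler_core {m n : ℕ} (Θ : Matrix (Fin n) (Fin m) ℝ) (a : Fin m → ℤ) (b : Fin n → ℤ)
    (v : Fin m ⊕ Fin n → ℝ)
    (hv : v = Sum.elim (fun j => (a j : ℝ) + Θ.transpose.mulVec (fun i => (b i : ℝ)) j)
      (fun i => (b i : ℝ)))
    (hv0 : v ≠ 0) (c : Fin m ⊕ Fin n → ℝ) (hc : ∀ i, 0 < c i) (W : ℝ)
    (hW : ∀ i, |v i| * c i ≤ W) (hWc : W < ∏ i, c i) :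
    ∃ (x : Fin m → ℤ) (y : Fin n → ℤ) (z : Fin m ⊕ Fin n → ℝ),
      z = Sum.elim (fun j => (x j : ℝ)) (fun i => (y i : ℝ) - Θ.mulVec (fun j => (x j : ℝ)) i) ∧
      z ≠ 0 ∧ ∀ i, |z i| ≤ ((m + n : ℕ) : ℝ) * c i := by
  obtain ⟨i0, hi0⟩ := Function.ne_iff.mp hv0
  obtain ⟨k, -, hk⟩ := Finset.exists_max_image Finset.univ (fun i => |v i| * c i) ⟨i0, Finset.mem_univ _⟩
  have hvk : 0 < |v k| := by
    have h1 : 0 < |v i0| * c i0 := mul_pos (abs_pos.mpr hi0) (hc i0)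
    have h2 := lt_of_lt_of_le h1 (hk i0 (Finset.mem_univ _))
    exact pos_of_mul_pos_left h2 (hc k).le
  set Z : Matrix (Fin m ⊕ Fin n) (Fin m ⊕ Fin n) ℝ := Matrix.fromBlocks 1 0 (-Θ) 1 with hZ
  set N : Matrix (Fin m ⊕ Fin n) (Fin m ⊕ Fin n) ℝ :=
    (1 : Matrix (Fin m ⊕ Fin n) (Fin m ⊕ Fin n) ℝ).updateRow k v with hN
  have hdet : (N * Z).det = v k := by
    rw [Matrix.det_mul, hZ, Matrix.det_fromBlocks_zero₁₂, hN, ← Matrix.cramer_transpose_apply]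
    simp
  have hcard : 1 ≤ ((m + n : ℕ) : ℝ) := by
    have : 0 < Fintype.card (Fin m ⊕ Fin n) := Fintype.card_pos_iff.mpr ⟨k⟩
    simp only [Fintype.card_sum, Fintype.card_fin] at this
    exact_mod_cast this
  obtain ⟨p, hp0, hp⟩ := minkowski_lin (N * Z) (by rw [hdet]; exact abs_pos.mp hvk)
    (Function.update c k 1)
    (by
      intro i
      by_cases h : i = k
      · subst h; simp
      · simp [h, hc i])
    (by
      rw [hdet, Finset.prod_update_of_mem (Finset.mem_univ k), one_mul]
      have h1 : ∏ i, c i = c k * ∏ i ∈ Finset.univ \ {k}, c i := by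
        rw [← Finset.prod_sdiff (Finset.subset_univ {k}), Finset.prod_singleton, mul_comm]
      have h2 := lt_of_le_of_lt (hW k) hWc
      rw [h1, mul_comm] at h2
      exact lt_of_mul_lt_mul_left h2 (hc k).le)
  set z : Fin m ⊕ Fin n → ℝ := Z.mulVec (fun j => (p j : ℝ)) with hz
  have hzE : z = Sum.elim (fun j => (p (Sum.inl j) : ℝ))
      (fun i => (p (Sum.inr i) : ℝ) - Θ.mulVec (fun j => (p (Sum.inl j) : ℝ)) i) := by
    rw [hz, hZ, Matrix.fromBlocks_mulVec]
    funext i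
    rcases i with i | i
    · simp [Function.comp_def]
    · simp only [Matrix.neg_mulVec, Function.comp_def, Matrix.one_mulVec, Sum.elim_inr, Pi.add_apply,
        Pi.neg_apply]
      ring
  have hrow : ∀ i, i ≠ k → |z i| < c i := by
    intro i hi
    have := hp i
    rw [← Matrix.mulVec_mulVec, ← hz] at this
    simpa [hN, hi, Matrix.mulVec, Matrix.one_apply, dotProduct] using this
  have hk1 : |v ⬝ᵥ z| < 1 := by
    have := hp k
    rw [← Matrix.mulVec_mulVec, ← hz] at this
    simpa [hN, Matrix.mulVec] using this
  have hint : v ⬝ᵥ z = ((∑ j, a j * p (Sum.inl j) + ∑ i, b i * p (Sum.inr i) : ℤ) : ℝ) := by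
    rw [hv, hzE, sumElim_dotProduct_sumElim]
    have h1 : (Θ.transpose.mulVec (fun i => (b i : ℝ))) ⬝ᵥ (fun j => (p (Sum.inl j) : ℝ))
        = (fun i => (b i : ℝ)) ⬝ᵥ (Θ.mulVec (fun j => (p (Sum.inl j) : ℝ))) := by
      rw [Matrix.mulVec_transpose, Matrix.dotProduct_mulVec]
    simp only [dotProduct, add_mul, mul_sub, Finset.sum_add_distrib, Finset.sum_sub_distrib] at h1 ⊢
    push_cast
    linarith
  have hzero : v ⬝ᵥ z = 0 := by
    rw [hint] at hk1 ⊢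
    have h3 : |(∑ j, a j * p (Sum.inl j) + ∑ i, b i * p (Sum.inr i) : ℤ)| < 1 := by exact_mod_cast hk1
    rw [Int.abs_lt_one_iff.mp h3]
    simp
  refine ⟨fun j => p (Sum.inl j), fun i => p (Sum.inr i), z, hzE, ?_, ?_⟩
  · intro h0
    apply hp0
    have hx : ∀ j, p (Sum.inl j) = 0 := by
      intro j
      have := congrFun (hzE.symm.trans h0) (Sum.inl j)
      simpa using this
    funext i
    rcases i with i | i
    · exact hx i
    · have := congrFun (hzE.symm.trans h0) (Sum.inr i)
      simp only [hx, Sum.elim_inr, Int.cast_zero, Pi.zero_apply] at this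
      have h5 : Θ.mulVec (fun _ : Fin m => (0 : ℝ)) = 0 := Matrix.mulVec_zero Θ
      rw [h5] at this
      simpa using this
  · intro i
    by_cases hi : i = k
    · subst hi
      have h1 : v i * z i = - ∑ j ∈ Finset.univ.erase i, v j * z j := by
        have := Finset.add_sum_erase Finset.univ (fun j => v j * z j) (Finset.mem_univ i)
        simp only [dotProduct] at hzero
        linarith
      have h2 : |v i| * |z i| ≤ ∑ j ∈ Finset.univ.erase i, |v i| * c i := by
        rw [← abs_mul, h1, abs_neg]
        refine (Finset.abs_sum_le_sum_abs _ _).trans (Finset.sum_le_sum ?_)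
        intro j hj
        rw [abs_mul]
        refine le_trans ?_ (hk j (Finset.mem_univ _))
        exact mul_le_mul_of_nonneg_left (hrow j (Finset.ne_of_mem_erase hj)).le (abs_nonneg _)
      rw [Finset.sum_const, nsmul_eq_mul] at h2
      have h3 : ((Finset.univ.erase i).card : ℝ) ≤ ((m + n : ℕ) : ℝ) := by
        have := Finset.card_le_card (Finset.erase_subset i Finset.univ)
        simp only [Finset.card_univ, Fintype.card_sum, Fintype.card_fin] at this
        exact_mod_cast this
      have h4 : |v i| * |z i| ≤ |v i| * (((m + n : ℕ) : ℝ) * c i) := by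
        refine h2.trans ?_
        have := mul_le_mul_of_nonneg_right h3 (mul_pos hvk (hc i)).le
        linarith
      exact le_of_mul_le_mul_left h4 hvk
    · have := hrow i hi
      have h6 := mul_le_mul_of_nonneg_right hcard (hc i).le
      linarith

/-- Mahler's transference principle for `lattDual` and `latt`. -/
lemma mahler_latt {m n : ℕ} (Θ : Matrix (Fin n) (Fin m) ℝ) (v : Fin (m + n) → ℝ)
    (hv : v ∈ lattDual m n Θ) (hv0 : v ≠ 0) (c : Fin (m + n) → ℝ) (hc : ∀ i, 0 < c i) (W : ℝ)
    (hW : ∀ i, |v i| * c i ≤ W) (hWc : W < ∏ i, c i) :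
    ∃ z ∈ latt m n Θ, z ≠ 0 ∧ ∀ i, |z i| ≤ ((m + n : ℕ) : ℝ) * c i := by
  obtain ⟨a, b, rfl⟩ := hv
  obtain ⟨x, y, z, hz, hz0, hzb⟩ := mahler_core Θ a b _ rfl
    (by
      intro h0
      apply hv0
      funext i
      refine Fin.addCases (fun j => ?_) (fun j => ?_) i
      · rw [Fin.append_left]; exact congrFun h0 (Sum.inl j)
      · rw [Fin.append_right]; exact congrFun h0 (Sum.inr j))
    (Sum.elim (fun j => c (Fin.castAdd n j)) (fun j => c (Fin.natAdd m j)))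
    (by rintro (i | i) <;> exact hc _) W
    (by
      rintro (i | i)
      · simpa only [Fin.append_left, Sum.elim_inl] using hW (Fin.castAdd n i)
      · simpa only [Fin.append_right, Sum.elim_inr] using hW (Fin.natAdd m i))
    (by
      rw [Fin.prod_univ_add] at hWc
      simpa using hWc)
  refine ⟨_, ⟨x, y, rfl⟩, ?_, ?_⟩
  · intro h0
    apply hz0
    rw [hz]
    funext i
    rcases i with i | i
    · have := congrFun h0 (Fin.castAdd n i)
      rwa [Fin.append_left] at this
    · have := congrFun h0 (Fin.natAdd m i)
      rwa [Fin.append_right] at this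
  · intro i
    refine Fin.addCases (fun j => ?_) (fun j => ?_) i
    · rw [Fin.append_left]; simpa [hz] using hzb (Sum.inl j)
    · rw [Fin.append_right]; simpa [hz] using hzb (Sum.inr j)

lemma succMin_one_le {d : ℕ} {Λ : Set (Fin d → ℝ)} {τ : Fin d → ℝ} {lam : ℝ} (hl : 0 < lam)
    {v : Fin d → ℝ} (hv : v ∈ Λ) (hv0 : v ≠ 0) (hb : ∀ i, |v i| ≤ lam * Real.exp (τ i)) :
    succMin d Λ τ 1 ≤ lam := by
  apply csInf_le ⟨0, fun x hx => hx.1.le⟩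
  exact ⟨hl, fun _ => v, fun _ => hv, linearIndependent_unique_iff.mpr hv0, fun _ i => hb i⟩

/-- Some nonzero lattice vector lies in a multiple of the box below any bound exceeding
the first minimum, provided the lattice is nontrivial. -/
lemma exists_of_Lk_lt {d : ℕ} {Λ : Set (Fin d → ℝ)} {τ : Fin d → ℝ} {w : Fin d → ℝ}
    (hw : w ∈ Λ) (hw0 : w ≠ 0) {b : ℝ} (h : Lk d Λ τ 1 < b) :
    ∃ v ∈ Λ, v ≠ 0 ∧ ∀ i, |v i| ≤ Real.exp (b + τ i) := by
  have hlt : succMin d Λ τ 1 < Real.exp b := by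
    rcases le_or_gt (succMin d Λ τ 1) 0 with h0 | h0
    · exact lt_of_le_of_lt h0 (Real.exp_pos b)
    · exact (Real.log_lt_iff_lt_exp h0).mp h
  have hne : {lam : ℝ | 0 < lam ∧ ∃ v : Fin 1 → (Fin d → ℝ),
    (∀ l, v l ∈ Λ) ∧ LinearIndependent ℝ v ∧ ∀ l i, |v l i| ≤ lam * Real.exp (τ i)}.Nonempty := by
    refine ⟨1 + ∑ i, |w i| * Real.exp (-τ i), by positivity, fun _ => w, fun _ => hw,
      linearIndependent_unique_iff.mpr hw0, fun _ i => ?_⟩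
    have h1 : |w i| * Real.exp (-τ i) ≤ ∑ i, |w i| * Real.exp (-τ i) :=
      Finset.single_le_sum (f := fun i => |w i| * Real.exp (-τ i))
        (fun j _ => by positivity) (Finset.mem_univ i)
    have h2 : |w i| = (|w i| * Real.exp (-τ i)) * Real.exp (τ i) := by
      rw [mul_assoc, ← Real.exp_add]; simp
    rw [h2]
    exact mul_le_mul_of_nonneg_right (by linarith) (Real.exp_pos _).le
  obtain ⟨lam, ⟨hl0, v, hv, hli, hvb⟩, hlam⟩ := exists_lt_of_csInf_lt hne hlt
  refine ⟨v 0, hv 0, linearIndependent_unique_iff.mp hli, fun i => (hvb 0 i).trans ?_⟩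
  rw [Real.exp_add]
  exact mul_le_mul_of_nonneg_right hlam.le (Real.exp_pos _).le

lemma latt_ge_one {m n : ℕ} (Θ : Matrix (Fin n) (Fin m) ℝ) {v : Fin (m + n) → ℝ}
    (hv : v ∈ latt m n Θ) (hv0 : v ≠ 0) : ∃ i, 1 ≤ |v i| := by
  by_contra! hcon
  obtain ⟨x, y, rfl⟩ := hv
  have hx : ∀ j, x j = 0 := by
    intro j
    have := hcon (Fin.castAdd n j)
    rw [Fin.append_left] at this
    exact Int.abs_lt_one_iff.mp (by exact_mod_cast this)
  have h5 : Θ.mulVec (fun _ : Fin m => (0 : ℝ)) = 0 := Matrix.mulVec_zero Θ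
  have hy : ∀ j, y j = 0 := by
    intro j
    have := hcon (Fin.natAdd m j)
    rw [Fin.append_right] at this
    simp only [hx, Int.cast_zero, h5, Pi.zero_apply, sub_zero] at this
    exact Int.abs_lt_one_iff.mp (by exact_mod_cast this)
  apply hv0
  funext i
  refine Fin.addCases (fun j => ?_) (fun j => ?_) i
  · rw [Fin.append_left]; simp [hx]
  · rw [Fin.append_right]; simp [hx, hy, h5]

lemma dual_unit_mem {m n : ℕ} (Θ : Matrix (Fin n) (Fin (m + 1)) ℝ) :
    Fin.append (fun j : Fin (m + 1) => if j = 0 then (1 : ℝ) else 0) (fun _ : Fin n => (0 : ℝ))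
      ∈ lattDual (m + 1) n Θ := by
  refine ⟨fun j => if j = 0 then 1 else 0, fun _ => 0, ?_⟩
  have h5 : Θ.transpose.mulVec (fun _ : Fin n => (0 : ℝ)) = 0 := Matrix.mulVec_zero _
  simp [h5]

lemma dual_unit_ne {m n : ℕ} :
    Fin.append (fun j : Fin (m + 1) => if j = 0 then (1 : ℝ) else 0) (fun _ : Fin n => (0 : ℝ))
      ≠ 0 := by
  intro h
  have := congrFun h (Fin.castAdd n 0)
  rw [Fin.append_left] at this
  simp at this

lemma dual_unit_le {m n : ℕ} (i : Fin (m + 1 + n)) :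
    |Fin.append (fun j : Fin (m + 1) => if j = 0 then (1 : ℝ) else 0)
      (fun _ : Fin n => (0 : ℝ)) i| ≤ 1 := by
  refine Fin.addCases (fun j => ?_) (fun j => ?_) i
  · rw [Fin.append_left]; split_ifs <;> simp
  · rw [Fin.append_right]; simp

theorem stmt13 {m n : ℕ} (Θ : Matrix (Fin (n + 1)) (Fin (m + 1)) ℝ)
    (σ : Fin (m + 1) → ℝ) (ρ : Fin (n + 1) → ℝ)
    (hσa : Antitone σ) (hρa : Antitone ρ)
    (hσp : ∀ j, 0 < σ j) (hρp : ∀ i, 0 < ρ i)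
    (hσs : ∑ j, σ j = 1) (hρs : ∑ i, ρ i = 1)
    (δ : ℝ) (hδ : 1 ≤ δ)
    (γδ : ℝ)
    (hγδ : γδ = (((σ (Fin.last m))⁻¹ - 1) + (ρ (Fin.last n))⁻¹ * δ) /
      ((σ (Fin.last m))⁻¹ + ((ρ (Fin.last n))⁻¹ - 1) * δ))
    (hpsi : psiLow (m + 1 + (n + 1)) (lattDual (m + 1) (n + 1) Θ)
      (muStar (m + 1) (n + 1) σ ρ δ) 1 ≤ 1 - δ) :
    psiLow (m + 1 + (n + 1)) (latt (m + 1) (n + 1) Θ)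
      (muGamma (m + 1) (n + 1) σ ρ γδ) 1 ≤ 1 - γδ := by
  set d : ℝ := ((m + 1 + (n + 1) : ℕ) : ℝ) with hd
  have hd2 : 2 ≤ d := by
    have : 2 ≤ m + 1 + (n + 1) := by omega
    rw [hd]
    exact_mod_cast this
  -- auxiliary parameters
  obtain ⟨α, q, hα, hq, hαγ, hqσ, hqρ⟩ : ∃ α q : ℝ, 0 < α ∧ 0 ≤ q ∧ α * γδ = α + q ∧
      (∀ j, q ≤ (δ - α) * σ j) ∧ (∀ i, q ≤ (α * γδ - 1) * ρ i) := by
    have hs0 := hσp (Fin.last m)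
    have hr0 := hρp (Fin.last n)
    have hs1 : σ (Fin.last m) ≤ 1 := by
      rw [← hσs]
      exact Finset.single_le_sum (fun j _ => (hσp j).le) (Finset.mem_univ _)
    have hr1 : ρ (Fin.last n) ≤ 1 := by
      rw [← hρs]
      exact Finset.single_le_sum (fun j _ => (hρp j).le) (Finset.mem_univ _)
    have hS1 : 1 ≤ (σ (Fin.last m))⁻¹ := (one_le_inv₀ hs0).mpr hs1
    have hR1 : 1 ≤ (ρ (Fin.last n))⁻¹ := (one_le_inv₀ hr0).mpr hr1
    have hSs : (σ (Fin.last m))⁻¹ * σ (Fin.last m) = 1 := inv_mul_cancel₀ hs0.ne'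
    have hRr : (ρ (Fin.last n))⁻¹ * ρ (Fin.last n) = 1 := inv_mul_cancel₀ hr0.ne'
    set S := (σ (Fin.last m))⁻¹
    set R := (ρ (Fin.last n))⁻¹
    have hD : 0 < S + R - 1 := by linarith
    have hRd : 0 ≤ (R - 1) * δ := mul_nonneg (by linarith) (by linarith)
    have hN : 0 < S + (R - 1) * δ := by linarith
    have hq0 : 0 ≤ (δ - 1) / (S + R - 1) := div_nonneg (by linarith) hD.le
    have e1 : (S + (R - 1) * δ) / (S + R - 1) * γδ =
        (S + (R - 1) * δ) / (S + R - 1) + (δ - 1) / (S + R - 1) := by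
      rw [hγδ]
      field_simp
      ring
    have e2 : δ - (S + (R - 1) * δ) / (S + R - 1) = S * ((δ - 1) / (S + R - 1)) := by
      field_simp
      ring
    have e3 : (S + (R - 1) * δ) / (S + R - 1) * γδ - 1 = R * ((δ - 1) / (S + R - 1)) := by
      rw [e1]
      field_simp
      ring
    refine ⟨(S + (R - 1) * δ) / (S + R - 1), (δ - 1) / (S + R - 1), div_pos hN hD, hq0, e1, ?_, ?_⟩
    · intro j
      rw [e2]
      have h1 : σ (Fin.last m) ≤ σ j := hσa (Fin.le_last j)
      have h2 : 1 ≤ S * σ j := by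
        rw [← hSs]
        exact mul_le_mul_of_nonneg_left h1 (by linarith)
      nlinarith
    · intro i
      rw [e3]
      have h1 : ρ (Fin.last n) ≤ ρ i := hρa (Fin.le_last i)
      have h2 : 1 ≤ R * ρ i := by
        rw [← hRr]
        exact mul_le_mul_of_nonneg_left h1 (by linarith)
      nlinarith
  -- the dual side: approximations exist frequently
  have hdual : ∀ ε > 0, ∃ᶠ s : ℝ in atTop,
      Lk (m + 1 + (n + 1)) (lattDual (m + 1) (n + 1) Θ)
        (s • muStar (m + 1) (n + 1) σ ρ δ) 1 / s < 1 - δ + ε := by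
    intro ε hε hcon
    simp only [not_lt] at hcon
    rw [psiLow, Filter.liminf_eq] at hpsi
    have hbdd : BddAbove {a : ℝ | ∀ᶠ s : ℝ in atTop,
        a ≤ Lk (m + 1 + (n + 1)) (lattDual (m + 1) (n + 1) Θ)
        (s • muStar (m + 1) (n + 1) σ ρ δ) 1 / s} := by
      set μ := muStar (m + 1) (n + 1) σ ρ δ
      refine ⟨∑ i, |μ i|, ?_⟩
      intro a ha
      obtain ⟨s, hs, hs0⟩ := (ha.and (eventually_gt_atTop (0 : ℝ))).exists
      by_contra! hlt
      have h1 : ∑ i, |μ i| < Lk (m + 1 + (n + 1)) (lattDual (m + 1) (n + 1) Θ) (s • μ) 1 / s :=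
        lt_of_lt_of_le hlt hs
      rw [lt_div_iff₀ hs0] at h1
      have h2 : succMin (m + 1 + (n + 1)) (lattDual (m + 1) (n + 1) Θ) (s • μ) 1 ≤
          Real.exp ((∑ i, |μ i|) * s) := by
        refine succMin_one_le (Real.exp_pos _) (dual_unit_mem Θ) dual_unit_ne (fun i => ?_)
        refine (dual_unit_le i).trans ?_
        rw [← Real.exp_add]
        apply Real.one_le_exp
        have h3 : |μ i| ≤ ∑ i, |μ i| :=
          Finset.single_le_sum (f := fun i => |μ i|) (fun j _ => abs_nonneg _) (Finset.mem_univ i)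
        have h4 := neg_abs_le (μ i)
        simp only [Pi.smul_apply, smul_eq_mul]
        nlinarith
      have h3 : 0 ≤ (∑ i, |μ i|) * s := by positivity
      rw [Lk] at h1
      have h4 : 0 < succMin (m + 1 + (n + 1)) (lattDual (m + 1) (n + 1) Θ) (s • μ) 1 := by
        rcases lt_or_eq_of_le (Real.sInf_nonneg (s := {lam : ℝ | 0 < lam ∧
          ∃ v : Fin 1 → (Fin (m + 1 + (n + 1)) → ℝ),
          (∀ l, v l ∈ lattDual (m + 1) (n + 1) Θ) ∧ LinearIndependent ℝ v ∧
            ∀ l i, |v l i| ≤ lam * Real.exp ((s • μ) i)}) (fun x hx => hx.1.le)) with h | h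
        · exact h
        · rw [succMin] at h1
          rw [← h, Real.log_zero] at h1
          linarith
      have h5 := (Real.log_le_iff_le_exp h4).mpr h2
      linarith
    have := le_csSup hbdd hcon
    linarith
  rw [psiLow, Filter.liminf_eq]
  set μ := muGamma (m + 1) (n + 1) σ ρ γδ with hμ
  -- positivity of the first minimum on the primal side
  have hlow : ∀ s : ℝ, 0 < s → Real.exp (-(∑ i, |μ i|) * s) ≤
      succMin (m + 1 + (n + 1)) (latt (m + 1) (n + 1) Θ) (s • μ) 1 ∨
      {lam : ℝ | 0 < lam ∧
          ∃ v : Fin 1 → (Fin (m + 1 + (n + 1)) → ℝ),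
          (∀ l, v l ∈ latt (m + 1) (n + 1) Θ) ∧ LinearIndependent ℝ v ∧
            ∀ l i, |v l i| ≤ lam * Real.exp ((s • μ) i)} = ∅ := by
    intro s hs
    rcases Set.eq_empty_or_nonempty {lam : ℝ | 0 < lam ∧
          ∃ v : Fin 1 → (Fin (m + 1 + (n + 1)) → ℝ),
          (∀ l, v l ∈ latt (m + 1) (n + 1) Θ) ∧ LinearIndependent ℝ v ∧
            ∀ l i, |v l i| ≤ lam * Real.exp ((s • μ) i)} with he | hne
    · right
      exact he
    · left
      refine le_csInf hne ?_
      rintro lam ⟨hl, v, hv, hli, hb⟩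
      obtain ⟨i, hi⟩ := latt_ge_one Θ (hv 0) (linearIndependent_unique_iff.mp hli)
      have h1 := hi.trans (hb 0 i)
      have h3 : |μ i| ≤ ∑ i, |μ i| :=
        Finset.single_le_sum (f := fun i => |μ i|) (fun j _ => abs_nonneg _) (Finset.mem_univ i)
      have h4 := le_abs_self (μ i)
      have h5 : Real.exp ((s • μ) i) ≤ Real.exp ((∑ i, |μ i|) * s) := by
        apply Real.exp_le_exp.mpr
        simp only [Pi.smul_apply, smul_eq_mul]
        nlinarith
      have h6 : 1 ≤ lam * Real.exp ((∑ i, |μ i|) * s) :=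
        h1.trans (mul_le_mul_of_nonneg_left h5 hl.le)
      rw [neg_mul, Real.exp_neg]
      exact (inv_le_iff_one_le_mul₀ (Real.exp_pos _)).mpr h6
  apply csSup_le
  · refine ⟨-(∑ i, |μ i|), ?_⟩
    filter_upwards [eventually_gt_atTop (0 : ℝ)] with s hs
    rw [le_div_iff₀ hs, Lk]
    rcases hlow s hs with h | h
    · exact (Real.le_log_iff_exp_le (lt_of_lt_of_le (Real.exp_pos _) h)).mpr h
    · rw [succMin, h, Real.sInf_empty, Real.log_zero]
      have : 0 ≤ (∑ i, |μ i|) * s := by positivity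
      linarith
  intro a ha
  by_contra! hlt
  obtain ⟨ε, hε, hεα⟩ : ∃ ε : ℝ, 0 < ε ∧ 4 * ε = α * (a - (1 - γδ)) :=
    ⟨α * (a - (1 - γδ)) / 4, by
      have := mul_pos hα (sub_pos.mpr hlt)
      linarith, by ring⟩
  have ht : Tendsto (fun s : ℝ => α * s) atTop atTop := tendsto_id.const_mul_atTop hα
  have ht2 : Tendsto (fun s : ℝ => Real.exp (ε * s)) atTop atTop :=
    Real.tendsto_exp_atTop.comp (tendsto_id.const_mul_atTop hε)
  obtain ⟨s, hs1, hs2, hs3, hs0⟩ := ((hdual ε hε).and_eventually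
    ((ht.eventually ha).and ((ht2.eventually_ge_atTop d).and (eventually_gt_atTop (0 : ℝ))))).exists
  rw [div_lt_iff₀ hs0] at hs1
  obtain ⟨v, hv, hv0, hvb⟩ := exists_of_Lk_lt (dual_unit_mem Θ) dual_unit_ne hs1
  have hαs : 0 < α * s := mul_pos hα hs0
  have hμl : ∀ j, μ (Fin.castAdd (n + 1) j) = γδ - 1 + d * σ j := by
    intro j
    simp only [hμ, muGamma, eOne, eTwo, Pi.add_apply, Pi.neg_apply, Pi.smul_apply, smul_eq_mul,
      Fin.append_left, ← hd]
    ring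
  have hμr : ∀ j, μ (Fin.natAdd (m + 1) j) = γδ - 1 - γδ * d * ρ j.rev := by
    intro j
    simp only [hμ, muGamma, eOne, eTwo, Pi.add_apply, Pi.neg_apply, Pi.smul_apply, smul_eq_mul,
      Fin.append_right, ← hd]
    ring
  have hρs2 : ∑ i : Fin (n + 1), ρ i.rev = 1 := by
    rw [← hρs]
    exact Equiv.sum_comp Fin.revPerm ρ
  have hsum : ∑ i, s * (α * (μ i + 1 - γδ) + 2 * ε) = s * (-d * q + 2 * d * ε) := by
    rw [← Finset.mul_sum, Finset.sum_add_distrib, Finset.sum_const, Finset.card_univ,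
      Fintype.card_fin, nsmul_eq_mul, ← hd, Fin.sum_univ_add]
    have h1 : ∑ i : Fin (m + 1), α * (μ (Fin.castAdd (n + 1) i) + 1 - γδ) = α * d := by
      have : ∀ i : Fin (m + 1), α * (μ (Fin.castAdd (n + 1) i) + 1 - γδ) = (α * d) * σ i := by
        intro i; rw [hμl]; ring
      rw [Finset.sum_congr rfl (fun i _ => this i), ← Finset.mul_sum, hσs, mul_one]
    have h2 : ∑ i : Fin (n + 1), α * (μ (Fin.natAdd (m + 1) i) + 1 - γδ) = -(α * γδ * d) := by
      have : ∀ i : Fin (n + 1), α * (μ (Fin.natAdd (m + 1) i) + 1 - γδ) =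
          (-(α * γδ * d)) * ρ i.rev := by
        intro i; rw [hμr]; ring
      rw [Finset.sum_congr rfl (fun i _ => this i), ← Finset.mul_sum, hρs2, mul_one]
    rw [h1, h2, hαγ]
    ring
  obtain ⟨z, hz, hz0, hzb⟩ := mahler_latt Θ v hv hv0
    (fun i => Real.exp (s * (α * (μ i + 1 - γδ) + 2 * ε))) (fun i => Real.exp_pos _)
    (Real.exp (s * (-d * q + 3 * ε)))
    (by
      intro i
      refine (mul_le_mul_of_nonneg_right (hvb i) (Real.exp_pos _).le).trans ?_
      rw [← Real.exp_add]
      apply Real.exp_le_exp.mpr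
      have hd0 : 0 ≤ d * s := by positivity
      refine Fin.addCases (fun j => ?_) (fun j => ?_) i
      · rw [hμl]
        simp only [muStar, eOne, eTwo, Pi.sub_apply, Pi.smul_apply, smul_eq_mul,
          Fin.append_left, ← hd]
        have := mul_le_mul_of_nonneg_left (hqσ j) hd0
        linarith
      · rw [hμr]
        simp only [muStar, eOne, eTwo, Pi.sub_apply, Pi.smul_apply, smul_eq_mul,
          Fin.append_right, ← hd]
        have := mul_le_mul_of_nonneg_left (hqρ j.rev) hd0
        linarith)
    (by
      rw [← Real.exp_sum, hsum]
      apply Real.exp_lt_exp.mpr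
      apply mul_lt_mul_of_pos_left _ hs0
      nlinarith)
  have hzbound : ∀ i, |z i| ≤
      Real.exp (s * (3 * ε + α * (1 - γδ))) * Real.exp (((α * s) • μ) i) := by
    intro i
    refine (hzb i).trans ?_
    refine (mul_le_mul_of_nonneg_right hs3 (Real.exp_pos _).le).trans ?_
    rw [← Real.exp_add, ← Real.exp_add]
    apply Real.exp_le_exp.mpr
    simp only [Pi.smul_apply, smul_eq_mul]
    apply le_of_eq
    ring
  have hup : succMin (m + 1 + (n + 1)) (latt (m + 1) (n + 1) Θ) ((α * s) • μ) 1 ≤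
      Real.exp (s * (3 * ε + α * (1 - γδ))) := by
    exact succMin_one_le (Real.exp_pos _) hz hz0 hzbound
  have hpos : 0 < succMin (m + 1 + (n + 1)) (latt (m + 1) (n + 1) Θ) ((α * s) • μ) 1 := by
    rcases hlow (α * s) hαs with h | h
    · exact lt_of_lt_of_le (Real.exp_pos _) h
    · exfalso
      have hmem := Set.eq_empty_iff_forall_notMem.mp h
        (Real.exp (s * (3 * ε + α * (1 - γδ))))
      exact hmem ⟨Real.exp_pos _, fun _ => z, fun _ => hz, linearIndependent_unique_iff.mpr hz0,
        fun _ i => hzbound i⟩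
  rw [le_div_iff₀ hαs, Lk] at hs2
  have h5 := (Real.log_le_iff_le_exp hpos).mpr hup
  have h6 : s * (4 * ε) = s * (α * (a - (1 - γδ))) := by rw [hεα]
  have h7 : 0 < s * ε := mul_pos hs0 hε
  linarith
end
end

section
/- For every k ∈ {1,…,d} one has ω^{(k)}_{σ,ρ}(Θ) · ω̂^{(d+1−k)}_{ρ,σ}(ᵀΘ) = 1 and ω̂^{(k)}_{σ,ρ}(Θ) · ω^{(d+1−k)}_{ρ,σ}(ᵀΘ) = 1, where all four exponents take values in [0,+∞] and the convention is that if one factor equals 0 then the other equals +∞ and vice versa. Equivalently: for every real γ > 0, ω^{(k)}_{σ,ρ}(Θ) ≥ γ if and only if ω̂^{(d+1−k)}_{ρ,σ}(ᵀΘ) ≤ γ^{−1}, and ω̂^{(k)}_{σ,ρ}(Θ) ≥ γ if and only if ω^{(d+1−k)}_{ρ,σ}(ᵀΘ) ≤ γ^{−1}. -/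
open Filter

noncomputable section

/-- Real cast of an integer vector. -/
def castV {ι : Type*} (z : ι → ℤ) : ι → ℝ := fun i => (z i : ℝ)

lemma castV_indep {ι κ : Type*} [Finite ι] {v : κ → ι → ℤ} :
    LinearIndependent ℝ (fun i => castV (v i)) ↔ LinearIndependent ℤ v :=
  linearIndependent_algebraMap_comp_iff (R := ℤ) (S := ℝ) (v := v)

lemma ortho_indep {ι : Type*} [Fintype ι] [DecidableEq ι] {k l : ℕ} (v : Fin k → ι → ℤ)
    (w : Fin l → ι → ℤ)
    (hv : LinearIndependent ℤ v) (hw : LinearIndependent ℤ w)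
    (h : ∀ a b, v a ⬝ᵥ w b = 0) : k + l ≤ Fintype.card ι := by
  rw [← castV_indep] at hv hw
  have h1 := LinearIndependent.rank_matrix (M := Matrix.of (fun i => castV (v i))) hv
  have h2 := LinearIndependent.rank_matrix (M := Matrix.of (fun i => castV (w i))) hw
  have h3 := Matrix.rank_add_rank_le_card_of_mul_eq_zero
    (A := Matrix.of (fun i => castV (v i))) (B := (Matrix.of (fun i => castV (w i))).transpose) (by
      ext a b
      have := h a b
      simp only [Matrix.mul_apply, Matrix.transpose_apply, Matrix.of_apply, castV, Matrix.zero_apply]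
      simp only [dotProduct] at this
      exact_mod_cast this)
  rw [Matrix.rank_transpose] at h3
  simp at h1 h2
  omega

lemma minkowski_forms {d : ℕ} (B : Matrix (Fin d) (Fin d) ℝ) (hB : B.det ≠ 0) (c : Fin d → ℝ)
    (hc : ∀ i, 0 < c i) (h : |B.det| < ∏ i, c i) :
    ∃ z : Fin d → ℤ, z ≠ 0 ∧ ∀ i, |(B.mulVec (castV z)) i| < c i := by
  have fund := ZSpan.isAddFundamentalDomain' (Pi.basisFun ℝ (Fin d)) MeasureTheory.volume
  have : Countable (Submodule.span ℤ (Set.range (Pi.basisFun ℝ (Fin d)))).toAddSubgroup :=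
    inferInstanceAs (Countable (Submodule.span ℤ (Set.range (Pi.basisFun ℝ (Fin d)))))
  set s : Set (Fin d → ℝ) := (Matrix.toLin' B) ⁻¹' (Set.pi Set.univ fun i => Set.Ioo (-c i) (c i)) with hs
  have hdet : LinearMap.det (Matrix.toLin' B) = B.det := LinearMap.det_toLin' B
  have hvol : MeasureTheory.volume s = ENNReal.ofReal (|B.det|⁻¹ * ∏ i, (2 * c i)) := by
    rw [hs, MeasureTheory.Measure.addHaar_preimage_linearMap _ (by rwa [hdet]), hdet,
      Real.volume_pi_Ioo, ENNReal.ofReal_mul (by positivity), abs_inv,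
      ENNReal.ofReal_prod_of_nonneg (fun i _ => by have := hc i; positivity)]
    congr 2
    ext i
    congr 1; ring
  obtain ⟨x, hx0, hx⟩ := MeasureTheory.exists_ne_zero_mem_lattice_of_measure_mul_two_pow_lt_measure
    (s := s) fund (by
      intro x hx i hi
      have := hx i hi
      simp only [map_neg, Pi.neg_apply, Set.mem_Ioo] at this ⊢
      constructor <;> linarith) ((convex_pi (fun i _ => convex_Ioo _ _)).is_linear_preimage
        (Matrix.toLin' B).isLinear) (by
      rw [hvol, ZSpan.fundamentalDomain_pi_basisFun, Real.volume_pi_Ico]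
      simp only [sub_zero, ENNReal.ofReal_one, Finset.prod_const_one, one_mul, Module.finrank_fin_fun]
      rw [Finset.prod_mul_distrib]
      have : (2:ENNReal)^d = ENNReal.ofReal (2^d) := by
        rw [ENNReal.ofReal_pow (by norm_num)]; norm_num
      rw [this]
      have hp : 0 < |B.det| := abs_pos.mpr hB
      refine (ENNReal.ofReal_lt_ofReal_iff (by have := hp.trans h; simp; positivity)).mpr ?_
      simp only [Finset.prod_const, Finset.card_univ, Fintype.card_fin]
      rw [lt_inv_mul_iff₀ hp, mul_comm]
      gcongr)
  obtain ⟨x, hxm⟩ := x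
  have hxm' : x ∈ Submodule.span ℤ (Set.range (Pi.basisFun ℝ (Fin d))) := hxm
  rw [Module.Basis.mem_span_iff_repr_mem] at hxm'
  choose z hz using hxm'
  have hzx : castV z = x := by
    ext i; simpa [castV] using hz i
  refine ⟨z, ?_, ?_⟩
  · rintro rfl
    apply hx0
    ext i
    simp [← hzx, castV]
  · intro i
    have := hx i (Set.mem_univ _)
    rw [abs_lt]
    simpa [hzx, Matrix.toLin'_apply] using this

lemma exists_argmin {α : Type*} (N : α → ℝ) (hN : ∀ R, {z | N z ≤ R}.Finite) (S : Set α)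
    (hS : S.Nonempty) : ∃ z ∈ S, ∀ y ∈ S, N z ≤ N y := by
  obtain ⟨z0, h0⟩ := hS
  obtain ⟨z, hz, hm⟩ := Set.exists_min_image (S ∩ {z | N z ≤ N z0}) N
    ((hN (N z0)).inter_of_right S) ⟨z0, h0, le_refl (N z0)⟩
  refine ⟨z, hz.1, fun y hy => ?_⟩
  by_cases h : N y ≤ N z0
  · exact hm y ⟨hy, h⟩
  · exact hz.2.trans (not_le.mp h).le

lemma greedy {d : ℕ} (N : (Fin d → ℤ) → ℝ) (hN : ∀ R, {z | N z ≤ R}.Finite) (r : ℕ) (hr : r ≤ d) :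
    ∃ v : Fin r → (Fin d → ℤ), LinearIndependent ℝ (fun i => castV (v i)) ∧
      ∀ i z, castV z ∉ Submodule.span ℝ ((fun j => castV (v j)) '' {j | j < i}) → N (v i) ≤ N z := by
  induction r with
  | zero => exact ⟨fun _ => 0, linearIndependent_empty_type, fun i => i.elim0⟩
  | succ r ih =>
    obtain ⟨v, hv, hm⟩ := ih (by omega)
    set W := Submodule.span ℝ (Set.range (fun j => castV (v j))) with hW
    have hne : {z : Fin d → ℤ | castV z ∉ W}.Nonempty := by
      by_contra hcon
      rw [Set.not_nonempty_iff_eq_empty, Set.eq_empty_iff_forall_notMem] at hcon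
      have htop : W = ⊤ := by
        rw [eq_top_iff, ← (Pi.basisFun ℝ (Fin d)).span_eq, Submodule.span_le]
        rintro _ ⟨i, rfl⟩
        have := hcon (Pi.single i 1)
        simp only [Set.mem_ofPred_eq, not_not] at this
        have heq : Pi.basisFun ℝ (Fin d) i = castV (Pi.single i 1) := by
          ext j
          simp [castV, Pi.single_apply]
        rw [heq]
        exact this
      have h1 := finrank_range_le_card (R := ℝ) (fun j => castV (v j))
      rw [Set.finrank, ← hW, htop, finrank_top] at h1
      simp at h1
      omega
    obtain ⟨y, hy, hymin⟩ := exists_argmin N hN _ hne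
    refine ⟨Fin.snoc v y, ?_, ?_⟩
    · have : (fun i => castV ((Fin.snoc v y : Fin (r+1) → (Fin d → ℤ)) i)) = 
          (Fin.snoc (fun j => castV (v j)) (castV y) : Fin (r+1) → (Fin d → ℝ)) := by
        ext i : 1
        refine Fin.lastCases ?_ (fun j => ?_) i <;> simp
      rw [this, linearIndependent_finSnoc]
      exact ⟨hv, hy⟩
    · intro i z
      refine Fin.lastCases ?_ (fun i => ?_) i
      · intro hz
        simp only [Fin.snoc_last]
        apply hymin
        intro h
        apply hz
        refine Submodule.span_mono ?_ h
        rintro _ ⟨j, rfl⟩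
        exact ⟨j.castSucc, Fin.castSucc_lt_last j, by simp⟩
      · intro hz
        simp only [Fin.snoc_castSucc]
        apply hm
        intro h
        apply hz
        refine Submodule.span_mono ?_ h
        rintro _ ⟨j, hj, rfl⟩
        exact ⟨j.castSucc, by simpa using hj, by simp⟩

/-- Euclidean norm of `A z` for an integer vector `z`. -/
def nrmA {d : ℕ} (A : Matrix (Fin d) (Fin d) ℝ) (z : Fin d → ℤ) : ℝ :=
  ‖(WithLp.toLp 2 (A.mulVec (castV z)) : EuclideanSpace ℝ (Fin d))‖

lemma abs_le_nrmA {d : ℕ} (A : Matrix (Fin d) (Fin d) ℝ) (z : Fin d → ℤ) (i : Fin d) :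
    |A.mulVec (castV z) i| ≤ nrmA A z := by
  have := PiLp.norm_apply_le (p := 2) (WithLp.toLp 2 (A.mulVec (castV z)) : EuclideanSpace ℝ (Fin d)) i
  simpa [nrmA] using this

lemma nrmA_finite {d : ℕ} (A : Matrix (Fin d) (Fin d) ℝ) (hA : A.det ≠ 0) (R : ℝ) :
    {z | nrmA A z ≤ R}.Finite := by
  set K : ℝ := ∑ i, ∑ j, |A⁻¹ i j| with hK
  apply Set.Finite.subset (Set.finite_Icc (fun _ : Fin d => -⌈K * R⌉) (fun _ => ⌈K * R⌉))
  intro z hz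
  have hz' : nrmA A z ≤ R := hz
  have hR : 0 ≤ R := (norm_nonneg _).trans hz'
  have key : ∀ i, |(z i : ℝ)| ≤ K * R := by
    intro i
    have h1 : (z i : ℝ) = (A⁻¹.mulVec (A.mulVec (castV z))) i := by
      rw [Matrix.mulVec_mulVec, Matrix.nonsing_inv_mul _ (isUnit_iff_ne_zero.mpr hA), Matrix.one_mulVec]
      rfl
    rw [h1, Matrix.mulVec, dotProduct]
    calc |∑ j, A⁻¹ i j * A.mulVec (castV z) j| ≤ ∑ j, |A⁻¹ i j * A.mulVec (castV z) j| :=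
          Finset.abs_sum_le_sum_abs _ _
      _ ≤ ∑ j, |A⁻¹ i j| * R := by
          gcongr with j
          rw [abs_mul]
          gcongr
          exact (abs_le_nrmA A z j).trans hz'
      _ = (∑ j, |A⁻¹ i j|) * R := by rw [Finset.sum_mul]
      _ ≤ K * R := by
          gcongr
          exact Finset.single_le_sum (f := fun i => ∑ j, |A⁻¹ i j|)
            (fun i _ => Finset.sum_nonneg fun j _ => abs_nonneg _) (Finset.mem_univ i)
  constructor
  · intro i
    have h2 := abs_le.mp ((key i).trans (Int.le_ceil _))
    have := h2.1
    exact_mod_cast this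
  · intro i
    have h2 := abs_le.mp ((key i).trans (Int.le_ceil _))
    have := h2.2
    exact_mod_cast this

lemma nrmA_pos {d : ℕ} (A : Matrix (Fin d) (Fin d) ℝ) (hA : A.det ≠ 0) (z : Fin d → ℤ)
    (hz : castV z ≠ 0) : 0 < nrmA A z := by
  unfold nrmA
  rw [norm_pos_iff]
  intro h
  have h' : A.mulVec (castV z) = 0 := by
    have := congrArg (WithLp.ofLp) h
    simpa using this
  exact hz (Matrix.eq_zero_of_mulVec_eq_zero hA h')

lemma prod_bound {d : ℕ} (A : Matrix (Fin d) (Fin d) ℝ) (hA : A.det ≠ 0)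
    (v : Fin d → (Fin d → ℤ)) (hv : LinearIndependent ℝ (fun i => castV (v i)))
    (hm : ∀ i z, castV z ∉ Submodule.span ℝ ((fun j => castV (v j)) '' {j | j < i}) →
      nrmA A (v i) ≤ nrmA A z) :
    ∏ i, nrmA A (v i) ≤ (d : ℝ) ^ d * |A.det| := by
  rcases Nat.eq_zero_or_pos d with rfl | hd
  · simp
  have hdR : (0:ℝ) < d := by exact_mod_cast hd
  have hpos : ∀ i, 0 < nrmA A (v i) := fun i => nrmA_pos A hA _ (hv.ne_zero i)
  by_contra hcon
  push Not at hcon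
  have hmono : ∀ i j, i ≤ j → nrmA A (v i) ≤ nrmA A (v j) := by
    intro i j hij
    apply hm
    intro hmem
    have := hv.notMem_span_image (s := {j | j < i}) (x := j) (by simpa using hij)
    exact this hmem
  let u : Fin d → EuclideanSpace ℝ (Fin d) := fun i => WithLp.toLp 2 (A.mulVec (castV (v i)))
  let b := InnerProductSpace.gramSchmidtOrthonormalBasis (𝕜 := ℝ) (by simp) u
  have hb : ∀ i j : Fin d, i < j → inner ℝ (b j) (u i) = 0 := fun i j hij =>
    InnerProductSpace.gramSchmidtOrthonormalBasis_inv_triangular _ u hij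
  let Q : Matrix (Fin d) (Fin d) ℝ := Matrix.of fun i j => b i j
  have hQ : Q * Q.transpose = 1 := by
    ext i l
    have := orthonormal_iff_ite.mp b.orthonormal l i
    rw [PiLp.inner_apply] at this
    simp only [Matrix.mul_apply, Matrix.transpose_apply, Q, Matrix.of_apply, Matrix.one_apply]
    simp at this
    rw [this]
    simp [eq_comm]
  have hQdet : |Q.det| = 1 := by
    have := congrArg Matrix.det hQ
    rw [Matrix.det_mul, Matrix.det_transpose, Matrix.det_one] at this
    rw [← sq_eq_sq₀ (abs_nonneg _) (by norm_num), sq_abs]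
    linarith [this, sq Q.det]
  have hQA : |(Q * A).det| = |A.det| := by rw [Matrix.det_mul, abs_mul, hQdet, one_mul]
  have hQv : ∀ x : Fin d → ℝ, ∀ i, (Q * A).mulVec x i = inner ℝ (b i) (WithLp.toLp 2 (A.mulVec x)) := by
    intro x i
    rw [← Matrix.mulVec_mulVec, PiLp.inner_apply]
    simp [Matrix.mulVec, dotProduct, Q, mul_comm]
  obtain ⟨z, hz0, hz⟩ := minkowski_forms (Q * A)
    (by rw [← abs_pos, hQA]; exact abs_pos.mpr hA) (fun i => nrmA A (v i) / d)
    (fun i => div_pos (hpos i) hdR) (by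
      rw [hQA, Finset.prod_div_distrib]
      simp only [Finset.prod_const, Finset.card_univ, Fintype.card_fin]
      rw [lt_div_iff₀ (by positivity)]
      linarith)
  have hzc : castV z ≠ 0 := by
    intro h
    apply hz0
    ext i
    have := congrFun h i
    simpa [castV] using this
  have hex : ∃ r : ℕ, castV z ∈ Submodule.span ℝ ((fun j => castV (v j)) '' {j | (j : ℕ) < r}) := by
    refine ⟨d, ?_⟩
    have h1 : {j : Fin d | (j : ℕ) < d} = Set.univ := by ext j; simp
    rw [h1, Set.image_univ, hv.span_eq_top_of_card_eq_finrank' (by simp)]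
    trivial
  classical
  have hspec := Nat.find_spec hex
  have hmin := fun r => Nat.find_min hex (m := r)
  set r := Nat.find hex with hr
  have hr0 : r ≠ 0 := by
    intro h0
    rw [h0] at hspec
    apply hzc
    simpa using hspec
  have hrd : r ≤ d := by
    apply Nat.find_min' hex
    have h1 : {j : Fin d | (j : ℕ) < d} = Set.univ := by ext j; simp
    rw [h1, Set.image_univ, hv.span_eq_top_of_card_eq_finrank' (by simp)]
    trivial
  let i : Fin d := ⟨r - 1, by omega⟩
  have h1 : nrmA A (v i) ≤ nrmA A z := by
    apply hm
    have := hmin (r - 1) (by omega)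
    simpa [Fin.lt_def, i] using this
  have h2 : ∀ j, i < j → (Q * A).mulVec (castV z) j = 0 := by
    intro j hj
    have hle : Submodule.span ℝ ((fun j => castV (v j)) '' {j | (j : ℕ) < r}) ≤
        LinearMap.ker ((LinearMap.proj j).comp (Matrix.mulVecLin (Q * A))) := by
      rw [Submodule.span_le]
      rintro _ ⟨l, hl, rfl⟩
      have hl' : (l : ℕ) < r := hl
      have hlj : l < j := by
        simp only [Fin.lt_def, i] at hj ⊢
        omega
      have := hb l j hlj
      simp only [SetLike.mem_coe, LinearMap.mem_ker, LinearMap.comp_apply, Matrix.mulVecLin_apply,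
        LinearMap.proj_apply]
      rw [hQv]
      exact this
    exact hle hspec
  have h3 : nrmA A z ^ 2 = ∑ j, ((Q * A).mulVec (castV z) j) ^ 2 := by
    unfold nrmA
    rw [← b.sum_sq_norm_inner_right]
    simp [hQv]
  have h4 : ∑ j, ((Q * A).mulVec (castV z) j) ^ 2 < ∑ j : Fin d, (nrmA A (v i) / d) ^ 2 := by
    apply Finset.sum_lt_sum_of_nonempty ⟨i, Finset.mem_univ _⟩
    intro j _
    by_cases hj : i < j
    · rw [h2 j hj, zero_pow two_ne_zero]
      have := hpos i
      positivity
    · rw [← sq_abs]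
      gcongr
      refine (hz j).trans_le ?_
      gcongr
      exact hmono j i (not_lt.mp hj)
  have h5 : ∑ j : Fin d, (nrmA A (v i) / d) ^ 2 ≤ nrmA A (v i) ^ 2 := by
    simp only [Finset.sum_const, Finset.card_univ, Fintype.card_fin, nsmul_eq_mul]
    rw [div_pow, mul_div_assoc', div_le_iff₀ (by positivity)]
    have : (d:ℝ) ≤ d^2 := by
      have : (1:ℝ) ≤ d := by exact_mod_cast hd
      nlinarith
    nlinarith [sq_nonneg (nrmA A (v i))]
  have h6 : nrmA A (v i) ^ 2 ≤ nrmA A z ^ 2 := by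
    have := (hpos i).le
    gcongr
  linarith

lemma adj_bound {d : ℕ} (M : Matrix (Fin d) (Fin d) ℝ) (hM : ∀ i j, |M i j| ≤ 1) (i j : Fin d) :
    |M.adjugate i j| ≤ (d.factorial : ℝ) := by
  rw [Matrix.adjugate_apply]
  have := Matrix.det_le (A := M.updateRow j (Pi.single i 1))
    (abv := AbsoluteValue.abs) (x := (1:ℝ)) (by
      intro a b
      simp only [AbsoluteValue.abs_apply, Matrix.updateRow_apply]
      split_ifs
      · rw [Pi.single_apply]; split_ifs <;> simp
      · exact hM a b)
  simpa using this

lemma mahler_fin {d : ℕ} (A B : Matrix (Fin d) (Fin d) ℝ) (hAB : A.transpose * B = 1)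
    (k : ℕ) (hk1 : 1 ≤ k) (hkd : k ≤ d) :
    (∃ v : Fin k → Fin d → ℤ, LinearIndependent ℤ v ∧
      ∀ l i, |(A.mulVec (castV (v l))) i| ≤ 1) ∨
    (∃ w : Fin (d + 1 - k) → Fin d → ℤ, LinearIndependent ℤ w ∧
      ∀ l i, |(B.mulVec (castV (w l))) i| ≤ (d.factorial : ℝ) * (d : ℝ) ^ d) := by
  have hA : A.det ≠ 0 := by
    intro h
    have := congrArg Matrix.det hAB
    rw [Matrix.det_mul, Matrix.det_transpose, h] at this
    simp at this
  obtain ⟨v, hv, hm⟩ := greedy (nrmA A) (nrmA_finite A hA) d le_rfl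
  have hprod := prod_bound A hA v hv hm
  have hpos : ∀ i, 0 < nrmA A (v i) := fun i => nrmA_pos A hA _ (hv.ne_zero i)
  have hmono : ∀ i j, i ≤ j → nrmA A (v i) ≤ nrmA A (v j) := by
    intro i j hij
    apply hm
    intro hmem
    have := hv.notMem_span_image (s := {j | j < i}) (x := j) (by simpa using hij)
    exact this hmem
  let k0 : Fin d := ⟨k - 1, by omega⟩
  by_cases hle : nrmA A (v k0) ≤ 1
  · left
    refine ⟨fun l => v ⟨l, by omega⟩, ?_, ?_⟩
    · have := castV_indep.mp hv
      exact this.comp (fun l : Fin k => (⟨l, by omega⟩ : Fin d)) (by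
        intro a b hab; ext; simpa using hab)
    · intro l i
      refine (abs_le_nrmA _ _ _).trans ((hmono _ k0 ?_).trans hle)
      simp only [Fin.le_def, k0]; omega
  · right
    push Not at hle
    let V : Matrix (Fin d) (Fin d) ℤ := Matrix.of fun i j => v j i
    let VR : Matrix (Fin d) (Fin d) ℝ := V.map (Int.cast)
    let M : Matrix (Fin d) (Fin d) ℝ := Matrix.of fun i j => A.mulVec (castV (v j)) i / nrmA A (v j)
    have hMb : ∀ i j, |M i j| ≤ 1 := by
      intro i j
      simp only [M, Matrix.of_apply, abs_div, abs_of_pos (hpos j)]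
      rw [div_le_one (hpos j)]
      exact abs_le_nrmA _ _ _
    have hAV : A * VR = M * Matrix.diagonal (fun j => nrmA A (v j)) := by
      ext i j
      rw [Matrix.mul_diagonal]
      simp only [M, Matrix.of_apply]
      rw [div_mul_cancel₀ _ (hpos j).ne']
      simp [Matrix.mul_apply, Matrix.mulVec, dotProduct, VR, V, castV]
    have hadj : VR.adjugate * A.adjugate =
        (Matrix.diagonal (fun j => nrmA A (v j))).adjugate * M.adjugate := by
      rw [← Matrix.adjugate_mul_distrib, hAV, Matrix.adjugate_mul_distrib]
    have hadjA : A.adjugate = A.det • B.transpose := by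
      have h1 : B.transpose * A = 1 := by
        have := congrArg Matrix.transpose hAB
        simpa using this
      calc A.adjugate = (B.transpose * A) * A.adjugate := by rw [h1, one_mul]
        _ = B.transpose * (A * A.adjugate) := by rw [Matrix.mul_assoc]
        _ = A.det • B.transpose := by rw [Matrix.mul_adjugate]; simp
    have hVdet : V.det ≠ 0 := by
      have h1 : VR.det ≠ 0 := by
        have h2 : LinearIndependent ℝ VR.col := hv
        rw [Matrix.linearIndependent_cols_iff_isUnit, Matrix.isUnit_iff_isUnit_det] at h2
        exact h2.ne_zero
      intro h
      apply h1
      have : VR.det = ((V.det : ℤ) : ℝ) := (Int.cast_det V).symm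
      rw [this, h]; simp
    have hVadj : VR.adjugate = V.adjugate.map (Int.cast) := 
      ((Int.castRingHom ℝ).map_adjugate V).symm
    have key : ∀ i j, A.det * B.mulVec (castV (V.adjugate i)) j =
        (∏ l ∈ Finset.univ.erase i, nrmA A (v l)) * M.adjugate i j := by
      intro i j
      have := congrFun (congrFun hadj i) j
      rw [hadjA, Matrix.adjugate_diagonal, Matrix.diagonal_mul, hVadj] at this
      rw [← this]
      simp only [Matrix.smul_apply, smul_eq_mul, Matrix.mul_apply, Matrix.mulVec,
        dotProduct, castV, Matrix.map_apply, Matrix.transpose_apply]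
      rw [Finset.mul_sum]
      apply Finset.sum_congr rfl
      intro l _
      ring
    have bound : ∀ i j, nrmA A (v i) * |B.mulVec (castV (V.adjugate i)) j| ≤
        (d.factorial : ℝ) * (d : ℝ) ^ d := by
      intro i j
      have hAp : 0 < |A.det| := abs_pos.mpr hA
      have h1 := congrArg abs (key i j)
      rw [abs_mul, abs_mul, abs_of_nonneg (Finset.prod_nonneg fun l _ => (hpos l).le)] at h1
      have h2 := adj_bound M hMb i j
      have h3 := Finset.mul_prod_erase Finset.univ (fun l => nrmA A (v l)) (Finset.mem_univ i)
      refine le_of_mul_le_mul_left ?_ hAp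
      calc |A.det| * (nrmA A (v i) * |B.mulVec (castV (V.adjugate i)) j|)
          = nrmA A (v i) * (|A.det| * |B.mulVec (castV (V.adjugate i)) j|) := by ring
        _ = (∏ l, nrmA A (v l)) * |M.adjugate i j| := by rw [h1, ← h3]; ring
        _ ≤ ((d:ℝ)^d * |A.det|) * d.factorial := by gcongr
        _ = _ := by ring
    have hrows : LinearIndependent ℤ (fun i => V.adjugate i) := by
      apply Matrix.linearIndependent_rows_of_det_ne_zero
      rw [Matrix.det_adjugate]
      exact pow_ne_zero _ hVdet
    refine ⟨fun l => V.adjugate ⟨k - 1 + l, by omega⟩, ?_, ?_⟩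
    · exact hrows.comp (fun l : Fin (d + 1 - k) => (⟨k - 1 + l, by omega⟩ : Fin d)) (by
        intro a b hab; ext; simpa using hab)
    · intro l j
      refine le_trans ?_ (bound ⟨k - 1 + l, by omega⟩ j)
      apply le_mul_of_one_le_left (abs_nonneg _)
      refine hle.le.trans (hmono k0 _ ?_)
      simp [Fin.le_def, k0]

lemma mahler_gen {ι : Type*} [Fintype ι] [DecidableEq ι] {d : ℕ} (e : ι ≃ Fin d)
    (A B : Matrix ι ι ℝ) (hAB : A.transpose * B = 1)
    (k : ℕ) (hk1 : 1 ≤ k) (hkd : k ≤ d) :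
    (∃ v : Fin k → ι → ℤ, LinearIndependent ℤ v ∧
      ∀ l i, |(A.mulVec (castV (v l))) i| ≤ 1) ∨
    (∃ w : Fin (d + 1 - k) → ι → ℤ, LinearIndependent ℤ w ∧
      ∀ l i, |(B.mulVec (castV (w l))) i| ≤ (d.factorial : ℝ) * (d : ℝ) ^ d) := by
  have hmv : ∀ (A : Matrix ι ι ℝ) (z : Fin d → ℤ) (i : ι), A.mulVec (castV (z ∘ e)) i =
      (A.submatrix e.symm e.symm).mulVec (castV z) (e i) := by
    intro A z i
    rw [Matrix.submatrix_mulVec_equiv]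
    simp
    rfl
  have hLI : ∀ {r : ℕ} (v : Fin r → Fin d → ℤ), LinearIndependent ℤ v →
      LinearIndependent ℤ (fun l => v l ∘ e) := by
    intro r v hv
    exact hv.map' (LinearEquiv.funCongrLeft ℤ ℤ e).toLinearMap (LinearEquiv.ker _)
  rcases mahler_fin (A.submatrix e.symm e.symm) (B.submatrix e.symm e.symm) (by
    rw [Matrix.transpose_submatrix, Matrix.submatrix_mul_equiv, hAB, Matrix.submatrix_one_equiv])
    k hk1 hkd with ⟨v, hv, h⟩ | ⟨w, hw, h⟩
  · left
    refine ⟨fun l => v l ∘ e, hLI v hv, fun l i => ?_⟩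
    rw [hmv]; exact h l _
  · right
    refine ⟨fun l => w l ∘ e, hLI w hw, fun l i => ?_⟩
    rw [hmv]; exact h l _

/-- The sign-twisted swap identifying dual lattice coordinates. -/
def dualEquiv (a b : ℕ) : (Fin a ⊕ Fin b → ℤ) ≃ₗ[ℤ] (Fin b → ℤ) × (Fin a → ℤ) where
  toFun w := (fun i => w (Sum.inr i), fun j => - w (Sum.inl j))
  invFun w := Sum.elim (fun j => - w.2 j) w.1
  map_add' x y := by
    ext i <;> simp
    ring
  map_smul' c x := by
    ext i <;> simp
  left_inv w := by
    ext i
    rcases i with i | i <;> simp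
  right_inv w := by
    ext i <;> simp

/-- `k` independent integer points with `|x_j| ≤ p_j`, `|(Θx - y)_i| ≤ q_i`. -/
def boxSol {a b : ℕ} (Θ : Matrix (Fin b) (Fin a) ℝ) (p : Fin a → ℝ) (q : Fin b → ℝ) (k : ℕ) : Prop :=
  ∃ v : Fin k → (Fin a → ℤ) × (Fin b → ℤ), LinearIndependent ℤ v ∧
    ∀ l, (∀ j, |((v l).1 j : ℝ)| ≤ p j) ∧
      ∀ i, |Θ.mulVec (fun j => ((v l).1 j : ℝ)) i - ((v l).2 i : ℝ)| ≤ q i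

lemma transfer_hard {a b : ℕ} (Θ : Matrix (Fin b) (Fin a) ℝ) (p : Fin a → ℝ) (q : Fin b → ℝ)
    (hp : ∀ j, 0 < p j) (hq : ∀ i, 0 < q i) (k : ℕ) (hk1 : 1 ≤ k) (hkd : k ≤ a + b) :
    boxSol Θ p q k ∨ boxSol Θ.transpose
      (fun i => ((a + b).factorial : ℝ) * ((a + b : ℕ) : ℝ) ^ (a + b) * (q i)⁻¹)
      (fun j => ((a + b).factorial : ℝ) * ((a + b : ℕ) : ℝ) ^ (a + b) * (p j)⁻¹) (a + b + 1 - k) := by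
  set C : ℝ := ((a + b).factorial : ℝ) * ((a + b : ℕ) : ℝ) ^ (a + b) with hC
  let A : Matrix (Fin a ⊕ Fin b) (Fin a ⊕ Fin b) ℝ :=
    Matrix.fromBlocks (Matrix.diagonal fun j => (p j)⁻¹) 0
      (Matrix.diagonal (fun i => (q i)⁻¹) * Θ) (-Matrix.diagonal (fun i => (q i)⁻¹))
  let B : Matrix (Fin a ⊕ Fin b) (Fin a ⊕ Fin b) ℝ :=
    Matrix.fromBlocks (Matrix.diagonal p) (Matrix.diagonal p * Θ.transpose) 0
      (-Matrix.diagonal q)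
  have hp' : Matrix.diagonal (fun j => (p j)⁻¹) * Matrix.diagonal p = 1 := by
    rw [Matrix.diagonal_mul_diagonal, ← Matrix.diagonal_one]
    congr 1; ext j; exact inv_mul_cancel₀ (hp j).ne'
  have hq' : Matrix.diagonal (fun j => (q j)⁻¹) * Matrix.diagonal q = 1 := by
    rw [Matrix.diagonal_mul_diagonal, ← Matrix.diagonal_one]
    congr 1; ext j; exact inv_mul_cancel₀ (hq j).ne'
  have hAB : A.transpose * B = 1 := by
    simp only [A, B, Matrix.fromBlocks_transpose, Matrix.fromBlocks_multiply,
      Matrix.transpose_mul, Matrix.diagonal_transpose, Matrix.transpose_zero, Matrix.transpose_neg]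
    rw [← Matrix.mul_assoc, Matrix.mul_neg, Matrix.mul_assoc Θ.transpose, neg_mul_neg, hp', hq']
    have hq2 : (Θ.transpose * Matrix.diagonal fun i => (q i)⁻¹) * Matrix.diagonal q = Θ.transpose := by
      rw [Matrix.mul_assoc, hq', Matrix.mul_one]
    simp [hq2]
  rcases mahler_gen finSumFinEquiv A B hAB k hk1 hkd with ⟨v, hv, h⟩ | ⟨w, hw, h⟩
  · left
    refine ⟨fun l => LinearEquiv.sumArrowLequivProdArrow _ _ ℤ ℤ (v l),
      hv.map' (LinearEquiv.sumArrowLequivProdArrow _ _ ℤ ℤ).toLinearMap (LinearEquiv.ker _), fun l => ⟨fun j => ?_, fun i => ?_⟩⟩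
    · have := h l (Sum.inl j)
      simp only [A, Matrix.fromBlocks_mulVec, Sum.elim_inl, Matrix.zero_mulVec, add_zero,
        Matrix.mulVec_diagonal, Function.comp, abs_mul, abs_inv, abs_of_pos (hp j)] at this
      rw [inv_mul_le_iff₀ (hp j)] at this
      simpa [castV] using this
    · have := h l (Sum.inr i)
      simp only [A, Matrix.fromBlocks_mulVec, Sum.elim_inr, Matrix.neg_mulVec, ← Matrix.mulVec_mulVec,
        Matrix.mulVec_diagonal, Function.comp_def, Pi.add_apply, Pi.neg_apply] at this
      rw [← sub_eq_add_neg, ← mul_sub, abs_mul, abs_inv, abs_of_pos (hq i),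
        inv_mul_le_iff₀ (hq i)] at this
      simpa [castV] using this
  · right
    refine ⟨fun l => dualEquiv a b (w l),
      hw.map' (dualEquiv a b).toLinearMap (LinearEquiv.ker _), fun l => ⟨fun i => ?_, fun j => ?_⟩⟩
    · have := h l (Sum.inr i)
      simp only [B, Matrix.fromBlocks_mulVec, Sum.elim_inr, Matrix.zero_mulVec, zero_add,
        Matrix.neg_mulVec, Pi.neg_apply, abs_neg,
        Matrix.mulVec_diagonal, Function.comp, abs_mul, abs_of_pos (hq i)] at this
      rw [← hC] at this
      beta_reduce
      rw [← div_eq_mul_inv, le_div_iff₀ (hq i), mul_comm]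
      simpa [castV, dualEquiv] using this
    · have := h l (Sum.inl j)
      simp only [B, Matrix.fromBlocks_mulVec, Sum.elim_inl, ← Matrix.mulVec_mulVec,
        Matrix.mulVec_diagonal, Function.comp_def, Pi.add_apply] at this
      rw [← mul_add, abs_mul, abs_of_pos (hp j)] at this
      rw [← hC] at this
      beta_reduce
      rw [← div_eq_mul_inv, le_div_iff₀ (hp j), mul_comm]
      simpa [castV, dualEquiv, add_comm] using this

lemma transfer_easy {a b : ℕ} (Θ : Matrix (Fin b) (Fin a) ℝ) (p s : Fin a → ℝ) (q r : Fin b → ℝ)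
    (k l : ℕ) (hkl : a + b < k + l) (h1 : boxSol Θ p q k) (h2 : boxSol Θ.transpose r s l)
    (hsum : ∑ j, p j * s j + ∑ i, q i * r i < 1) : False := by
  obtain ⟨v, hv, hvb⟩ := h1
  obtain ⟨w, hw, hwb⟩ := h2
  have hv' := hv.map' (LinearEquiv.sumArrowLequivProdArrow _ _ ℤ ℤ).symm.toLinearMap (LinearEquiv.ker _)
  have hw' := hw.map' (dualEquiv a b).symm.toLinearMap (LinearEquiv.ker _)
  have := ortho_indep _ _ hv' hw' (by
    intro c e
    obtain ⟨hc1, hc2⟩ := hvb c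
    obtain ⟨he1, he2⟩ := hwb e
    set x := (v c).1 with hx
    set y := (v c).2 with hy
    set y' := (w e).1 with hy'
    set x' := (w e).2 with hx'
    have heq : ((LinearEquiv.sumArrowLequivProdArrow (Fin a) (Fin b) ℤ ℤ).symm (v c)) ⬝ᵥ
        ((dualEquiv a b).symm (w e)) = - ∑ j, x j * x' j + ∑ i, y i * y' i := by
      have e1 : v c = (x, y) := rfl
      have e2 : w e = (y', x') := rfl
      rw [e1, e2]
      simp [dotProduct, dualEquiv, LinearEquiv.sumArrowLequivProdArrow, Equiv.sumArrowEquivProdArrow]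
    change ((LinearEquiv.sumArrowLequivProdArrow (Fin a) (Fin b) ℤ ℤ).symm (v c)) ⬝ᵥ
        ((dualEquiv a b).symm (w e)) = 0
    rw [heq]
    set xr : Fin a → ℝ := fun j => (x j : ℝ) with hxr
    set yr : Fin b → ℝ := fun j => (y' j : ℝ) with hyr
    have hreal : (((- ∑ j, x j * x' j + ∑ i, y i * y' i : ℤ)) : ℝ) =
        ∑ j, xr j * (Θ.transpose.mulVec yr j - x' j) - ∑ i, (Θ.mulVec xr i - y i) * yr i := by
      have hT : ∑ j, xr j * Θ.transpose.mulVec yr j = ∑ i, Θ.mulVec xr i * yr i := by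
        change xr ⬝ᵥ Θ.transpose.mulVec yr = Θ.mulVec xr ⬝ᵥ yr
        rw [Matrix.mulVec_transpose, dotProduct_comm, ← Matrix.dotProduct_mulVec, dotProduct_comm]
      simp only [mul_sub, sub_mul, Finset.sum_sub_distrib, hT]
      push_cast
      simp only [hxr, hyr]
      ring
    have habs : |(((- ∑ j, x j * x' j + ∑ i, y i * y' i : ℤ)) : ℝ)| < 1 := by
      rw [hreal]
      refine lt_of_le_of_lt ?_ hsum
      refine (abs_sub _ _).trans ?_
      gcongr
      · refine (Finset.abs_sum_le_sum_abs _ _).trans ?_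
        gcongr with j
        rw [abs_mul]
        exact mul_le_mul (hc1 j) (he2 j) (abs_nonneg _) ((abs_nonneg _).trans (hc1 j))
      · refine (Finset.abs_sum_le_sum_abs _ _).trans ?_
        gcongr with i
        rw [abs_mul]
        exact mul_le_mul (hc2 i) (he1 i) (abs_nonneg _) ((abs_nonneg _).trans (hc2 i))
    rw [← Int.cast_abs] at habs
    exact Int.abs_lt_one_iff.mp (by exact_mod_cast habs))
  simp at this
  omega

lemma wnorm_le_iff {k : ℕ} (w : Fin (k + 1) → ℝ) (hw : ∀ j, 0 < w j) (x : Fin (k + 1) → ℝ)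
    (r : ℝ) (hr : 0 < r) : wnorm w x ≤ r ↔ ∀ j, |x j| ≤ r ^ w j := by
  unfold wnorm
  rw [ciSup_le_iff (Set.finite_range _).bddAbove]
  refine forall_congr' fun j => ?_
  rw [one_div, Real.rpow_inv_le_iff_of_pos (abs_nonneg _) hr.le (hw j)]

lemma solvK_iff {m n : ℕ} (Θ : Matrix (Fin (n + 1)) (Fin (m + 1)) ℝ)
    (σ : Fin (m + 1) → ℝ) (ρ : Fin (n + 1) → ℝ) (hσp : ∀ j, 0 < σ j) (hρp : ∀ i, 0 < ρ i)
    (k : ℕ) (γ t : ℝ) (ht : 0 < t) :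
    solvK Θ σ ρ k γ t ↔ boxSol Θ (fun j => t ^ σ j) (fun i => (t ^ (-γ)) ^ ρ i) k := by
  unfold solvK boxSol
  refine exists_congr fun v => and_congr_right fun _ => forall_congr' fun l => ?_
  rw [wnorm_le_iff σ hσp _ _ ht, wnorm_le_iff ρ hρp _ _ (Real.rpow_pos_of_pos ht _)]

lemma boxSol_mono {a b : ℕ} (Θ : Matrix (Fin b) (Fin a) ℝ) {p p' : Fin a → ℝ} {q q' : Fin b → ℝ}
    {k : ℕ} (hp : ∀ j, p j ≤ p' j) (hq : ∀ i, q i ≤ q' i) (h : boxSol Θ p q k) :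
    boxSol Θ p' q' k := by
  obtain ⟨v, hv, h⟩ := h
  exact ⟨v, hv, fun l => ⟨fun j => ((h l).1 j).trans (hp j), fun i => ((h l).2 i).trans (hq i)⟩⟩

lemma ev_easy {m n : ℕ} (Θ : Matrix (Fin (n + 1)) (Fin (m + 1)) ℝ)
    (σ : Fin (m + 1) → ℝ) (ρ : Fin (n + 1) → ℝ) (hσp : ∀ j, 0 < σ j) (hρp : ∀ i, 0 < ρ i)
    (k l : ℕ) (hkl : m + 1 + (n + 1) < k + l) (γ δ s : ℝ) (h1 : s < γ) (h2 : 1 < δ * s) :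
    ∀ᶠ t : ℝ in atTop, ¬ (solvK Θ σ ρ k γ t ∧ solvK Θ.transpose ρ σ l δ (t ^ s)) := by
  have hlim : Tendsto (fun t : ℝ => ∑ j, t ^ (-((δ * s - 1) * σ j)) + ∑ i, t ^ (-((γ - s) * ρ i)))
      atTop (nhds (∑ _j : Fin (m + 1), 0 + ∑ _i : Fin (n + 1), 0)) := by
    refine Tendsto.add (tendsto_finsetSum _ fun j _ => ?_) (tendsto_finsetSum _ fun i _ => ?_)
    · exact tendsto_rpow_neg_atTop (mul_pos (by linarith) (hσp j))
    · exact tendsto_rpow_neg_atTop (mul_pos (by linarith) (hρp i))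
  simp only [Finset.sum_const_zero, add_zero] at hlim
  filter_upwards [hlim.eventually_lt_const (show (0:ℝ) < 1 by norm_num), eventually_gt_atTop 0]
    with t ht ht0
  rintro ⟨ha, hb⟩
  rw [solvK_iff _ _ _ hσp hρp _ _ _ ht0] at ha
  rw [solvK_iff _ _ _ hρp hσp _ _ _ (Real.rpow_pos_of_pos ht0 _)] at hb
  refine transfer_easy Θ _ _ _ _ k l hkl ha hb (lt_of_le_of_lt (le_of_eq ?_) ht)
  congr 1
  · refine Finset.sum_congr rfl fun j _ => ?_
    rw [← Real.rpow_mul ht0.le, ← Real.rpow_mul ht0.le, ← Real.rpow_add ht0]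
    congr 1; ring
  · refine Finset.sum_congr rfl fun j _ => ?_
    rw [← Real.rpow_mul ht0.le, ← Real.rpow_mul ht0.le, ← Real.rpow_add ht0]
    congr 1; ring

lemma ev_hard {m n : ℕ} (Θ : Matrix (Fin (n + 1)) (Fin (m + 1)) ℝ)
    (σ : Fin (m + 1) → ℝ) (ρ : Fin (n + 1) → ℝ) (hσp : ∀ j, 0 < σ j) (hρp : ∀ i, 0 < ρ i)
    (k : ℕ) (hk1 : 1 ≤ k) (hkd : k ≤ m + 1 + (n + 1)) (γ δ s : ℝ) (h1 : γ < s) (h2 : δ * s < 1) :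
    ∀ᶠ t : ℝ in atTop, solvK Θ σ ρ k γ t ∨
      solvK Θ.transpose ρ σ (m + 1 + (n + 1) + 1 - k) δ (t ^ s) := by
  set C : ℝ := ((m + 1 + (n + 1)).factorial : ℝ) * ((m + 1 + (n + 1) : ℕ) : ℝ) ^ (m + 1 + (n + 1))
    with hC
  have e1 : ∀ᶠ t : ℝ in atTop, ∀ j, C ≤ t ^ ((1 - δ * s) * σ j) :=
    eventually_all.mpr fun j =>
      (tendsto_rpow_atTop (mul_pos (by linarith) (hσp j))).eventually_ge_atTop C
  have e2 : ∀ᶠ t : ℝ in atTop, ∀ i, C ≤ t ^ ((s - γ) * ρ i) :=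
    eventually_all.mpr fun i =>
      (tendsto_rpow_atTop (mul_pos (by linarith) (hρp i))).eventually_ge_atTop C
  filter_upwards [e1, e2, eventually_gt_atTop 0] with t ht1 ht2 ht0
  rw [solvK_iff _ _ _ hσp hρp _ _ _ ht0, solvK_iff _ _ _ hρp hσp _ _ _ (Real.rpow_pos_of_pos ht0 _)]
  refine (transfer_hard Θ (fun j => t ^ σ j) (fun i => (t ^ (-γ)) ^ ρ i)
    (fun j => by positivity) (fun i => by positivity) k hk1 hkd).imp_right
    (boxSol_mono _ (fun i => ?_) (fun j => ?_))
  · beta_reduce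
    rw [← hC, ← Real.rpow_mul ht0.le, ← Real.rpow_mul ht0.le, ← div_eq_mul_inv,
      div_le_iff₀ (by positivity), ← Real.rpow_add ht0]
    refine (ht2 i).trans_eq (congrArg (fun z : ℝ => t ^ z) ?_); ring
  · beta_reduce
    rw [← hC, ← Real.rpow_mul ht0.le, ← Real.rpow_mul ht0.le, ← div_eq_mul_inv,
      div_le_iff₀ (by positivity), ← Real.rpow_add ht0]
    refine (ht1 j).trans_eq (congrArg (fun z : ℝ => t ^ z) ?_); ring

/-- Limsup-type exponent of a predicate. -/
def supI (P : ℝ → ℝ → Prop) : EReal := sSup (Real.toEReal '' {γ : ℝ | ∀ T : ℝ, ∃ t > T, P γ t})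

/-- Uniform exponent of a predicate. -/
def supH (P : ℝ → ℝ → Prop) : EReal := sSup (Real.toEReal '' {γ : ℝ | ∃ T : ℝ, ∀ t > T, P γ t})

lemma ev_iff (p : ℝ → Prop) : (∃ T : ℝ, ∀ t > T, p t) ↔ ∀ᶠ t in atTop, p t := by
  constructor
  · rintro ⟨T, h⟩
    filter_upwards [eventually_gt_atTop T] with t ht using h t ht
  · intro h
    obtain ⟨T, hT⟩ := eventually_atTop.mp h
    exact ⟨T, fun t ht => hT t ht.le⟩

lemma le_supI {P : ℝ → ℝ → Prop} {γ : ℝ} (h : ∃ᶠ t in atTop, P γ t) : (γ : EReal) ≤ supI P :=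
  le_sSup ⟨γ, frequently_atTop'.mp h, rfl⟩

lemma le_supH {P : ℝ → ℝ → Prop} {γ : ℝ} (h : ∀ᶠ t in atTop, P γ t) : (γ : EReal) ≤ supH P :=
  le_sSup ⟨γ, (ev_iff _).mpr h, rfl⟩

lemma lt_supI {P : ℝ → ℝ → Prop} {γ : ℝ} (h : (γ : EReal) < supI P) :
    ∃ γ', γ < γ' ∧ ∃ᶠ t in atTop, P γ' t := by
  obtain ⟨_, ⟨γ', hγ', rfl⟩, h⟩ := lt_sSup_iff.mp h
  exact ⟨γ', by exact_mod_cast h, frequently_atTop'.mpr hγ'⟩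

lemma lt_supH {P : ℝ → ℝ → Prop} {γ : ℝ} (h : (γ : EReal) < supH P) :
    ∃ γ', γ < γ' ∧ ∀ᶠ t in atTop, P γ' t := by
  obtain ⟨_, ⟨γ', hγ', rfl⟩, h⟩ := lt_sSup_iff.mp h
  exact ⟨γ', by exact_mod_cast h, (ev_iff _).mp hγ'⟩

lemma exists_btw {X : EReal} {γ : ℝ} (hγ : 0 < γ) (h : X < γ) : ∃ γ1 : ℝ, 0 < γ1 ∧ γ1 < γ ∧ X < γ1 := by
  have h1 : max X 0 < (γ : EReal) := max_lt h (by exact_mod_cast hγ)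
  obtain ⟨c, hc1, hc2⟩ := EReal.lt_iff_exists_real_btwn.mp h1
  refine ⟨c, ?_, by exact_mod_cast hc2, (le_max_left _ _).trans_lt hc1⟩
  exact_mod_cast (le_max_right _ _).trans_lt hc1

lemma exists_params {γ γ1 : ℝ} (h0 : 0 < γ1) (h : γ1 < γ) :
    ∃ δ s : ℝ, 0 < s ∧ γ⁻¹ < δ ∧ γ1 < s ∧ δ * s < 1 := by
  obtain ⟨s, hs1, hs2⟩ := exists_between h
  have hs0 := h0.trans hs1
  obtain ⟨δ, hd1, hd2⟩ := exists_between (inv_strictAnti₀ hs0 hs2)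
  refine ⟨δ, s, hs0, hd1, hs1, ?_⟩
  rwa [← lt_div_iff₀ hs0, one_div]

section
variable {P Q : ℝ → ℝ → Prop}

lemma order_core
    (hE : ∀ γ δ s : ℝ, s < γ → 1 < δ * s → ∀ᶠ t : ℝ in atTop, ¬ (P γ t ∧ Q δ (t ^ s)))
    (hH : ∀ γ δ s : ℝ, γ < s → δ * s < 1 → ∀ᶠ t : ℝ in atTop, P γ t ∨ Q δ (t ^ s))
    (γ : ℝ) (hγ : 0 < γ) :
    ((γ : EReal) ≤ supI P ↔ supH Q ≤ ((γ⁻¹ : ℝ) : EReal)) ∧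
    ((γ : EReal) ≤ supH P ↔ supI Q ≤ ((γ⁻¹ : ℝ) : EReal)) := by
  have back : ∀ s : ℝ, 0 < s → Tendsto (fun T : ℝ => T ^ s) atTop atTop := fun s hs =>
    tendsto_rpow_atTop hs
  have par : ∀ δ : ℝ, γ⁻¹ < δ → ∃ s : ℝ, 0 < s ∧ s < γ ∧ 1 < δ * s := by
    intro δ hδ
    have hi : 0 < γ⁻¹ := inv_pos.mpr hγ
    have hd0 : 0 < δ := hi.trans hδ
    obtain ⟨s, hs1, hs2⟩ := exists_between (inv_lt_of_inv_lt₀ hγ hδ)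
    refine ⟨s, (inv_pos.mpr hd0).trans hs1, hs2, ?_⟩
    rwa [← div_lt_iff₀' hd0, one_div]
  refine ⟨⟨fun h => ?_, fun h => ?_⟩, ⟨fun h => ?_, fun h => ?_⟩⟩
  · by_contra hcon
    obtain ⟨δ, hδ, hQ⟩ := lt_supH (not_le.mp hcon)
    obtain ⟨s, hs0, hs1, hs2⟩ := par δ hδ
    obtain ⟨γ2, hγ2, hP⟩ := lt_supI (lt_of_lt_of_le (by exact_mod_cast hs1 : (s : EReal) < γ) h)
    have := hP.and_eventually (((back s hs0).eventually hQ).and (hE γ2 δ s hγ2 hs2))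
    obtain ⟨t, h1, h2, h3⟩ := this.exists
    exact h3 ⟨h1, h2⟩
  · by_contra hcon
    obtain ⟨γ1, h0, h1, h2⟩ := exists_btw hγ (not_le.mp hcon)
    have hnP : ∀ᶠ t in atTop, ¬ P γ1 t := by
      rw [← not_frequently]
      exact fun hf => absurd (le_supI hf) (not_le.mpr h2)
    obtain ⟨δ, s, hs0, hd, hs, hds⟩ := exists_params h0 h1
    have hQ : ∀ᶠ t : ℝ in atTop, Q δ (t ^ s) := by
      filter_upwards [hnP, hH γ1 δ s hs hds] with t ha hb using hb.resolve_left ha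
    have hQ' : ∀ᶠ T : ℝ in atTop, Q δ T := by
      filter_upwards [(back s⁻¹ (inv_pos.mpr hs0)).eventually hQ, eventually_gt_atTop 0] with T hT hT0
      rwa [← Real.rpow_mul hT0.le, inv_mul_cancel₀ hs0.ne', Real.rpow_one] at hT
    have := (le_supH hQ').trans h
    exact absurd hd (not_lt.mpr (by exact_mod_cast this))
  · by_contra hcon
    obtain ⟨δ, hδ, hQ⟩ := lt_supI (not_le.mp hcon)
    obtain ⟨s, hs0, hs1, hs2⟩ := par δ hδ
    obtain ⟨γ2, hγ2, hP⟩ := lt_supH (lt_of_lt_of_le (by exact_mod_cast hs1 : (s : EReal) < γ) h)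
    have hQ' : ∃ᶠ t : ℝ in atTop, Q δ (t ^ s) := by
      refine (back s⁻¹ (inv_pos.mpr hs0)).frequently ?_
      refine (hQ.and_eventually (eventually_gt_atTop 0)).mono ?_
      rintro T ⟨hT, hT0⟩
      rwa [← Real.rpow_mul hT0.le, inv_mul_cancel₀ hs0.ne', Real.rpow_one]
    obtain ⟨t, h1, h2, h3⟩ := (hQ'.and_eventually (hP.and (hE γ2 δ s hγ2 hs2))).exists
    exact h3 ⟨h2, h1⟩
  · by_contra hcon
    obtain ⟨γ1, h0, h1, h2⟩ := exists_btw hγ (not_le.mp hcon)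
    have hnP : ∃ᶠ t in atTop, ¬ P γ1 t := by
      rw [← not_eventually]
      exact fun hf => absurd (le_supH hf) (not_le.mpr h2)
    obtain ⟨δ, s, hs0, hd, hs, hds⟩ := exists_params h0 h1
    have hQ : ∃ᶠ t : ℝ in atTop, Q δ (t ^ s) := by
      refine (hnP.and_eventually (hH γ1 δ s hs hds)).mono ?_
      rintro t ⟨ha, hb⟩
      exact hb.resolve_left ha
    have := (le_supI ((back s hs0).frequently hQ)).trans h
    exact absurd hd (not_lt.mpr (by exact_mod_cast this))

lemma supH_nonneg (h : ∀ γ < 0, ∀ᶠ t in atTop, P γ t) : 0 ≤ supH P := by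
  by_contra hcon
  obtain ⟨c, hc1, hc2⟩ := EReal.lt_iff_exists_real_btwn.mp (not_le.mp hcon)
  exact absurd (le_supH (h c (by exact_mod_cast hc2))) (not_le.mpr hc1)

lemma supI_nonneg (h : ∀ γ < 0, ∀ᶠ t in atTop, P γ t) : 0 ≤ supI P := by
  by_contra hcon
  obtain ⟨c, hc1, hc2⟩ := EReal.lt_iff_exists_real_btwn.mp (not_le.mp hcon)
  exact absurd (le_supI (h c (by exact_mod_cast hc2)).frequently) (not_le.mpr hc1)

end

lemma ev_neg {m n : ℕ} (Θ : Matrix (Fin (n + 1)) (Fin (m + 1)) ℝ)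
    (σ : Fin (m + 1) → ℝ) (ρ : Fin (n + 1) → ℝ) (hσp : ∀ j, 0 < σ j) (hρp : ∀ i, 0 < ρ i)
    (k : ℕ) (hkd : k ≤ m + 1 + (n + 1)) (γ : ℝ) (hγ : γ < 0) :
    ∀ᶠ t in atTop, solvK Θ σ ρ k γ t := by
  have hli : LinearIndependent ℤ (fun i => (Pi.basisFun ℤ (Fin (m + 1) ⊕ Fin (n + 1))) i) :=
    (Pi.basisFun ℤ _).linearIndependent
  have hli2 := (hli.comp (fun l : Fin k => finSumFinEquiv.symm (Fin.castLE hkd l)) (by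
    intro x y hxy
    simpa using hxy)).map' (LinearEquiv.sumArrowLequivProdArrow _ _ ℤ ℤ).toLinearMap (LinearEquiv.ker _)
  generalize ((LinearEquiv.sumArrowLequivProdArrow _ _ ℤ ℤ).toLinearMap ∘ 
    ((fun i => (Pi.basisFun ℤ (Fin (m + 1) ⊕ Fin (n + 1))) i) ∘
      (fun l : Fin k => finSumFinEquiv.symm (Fin.castLE hkd l)))) = v at hli2
  have e1 : ∀ᶠ t : ℝ in atTop, ∀ l j, |((v l).1 j : ℝ)| ≤ t ^ σ j :=
    eventually_all.mpr fun l => eventually_all.mpr fun j =>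
      (tendsto_rpow_atTop (hσp j)).eventually_ge_atTop _
  have e2 : ∀ᶠ t : ℝ in atTop, ∀ l i,
      |Θ.mulVec (fun j => ((v l).1 j : ℝ)) i - ((v l).2 i : ℝ)| ≤ t ^ (-γ * ρ i) :=
    eventually_all.mpr fun l => eventually_all.mpr fun i =>
      (tendsto_rpow_atTop (mul_pos (by linarith) (hρp i))).eventually_ge_atTop _
  filter_upwards [e1, e2, eventually_gt_atTop 0] with t h1 h2 ht0
  rw [solvK_iff _ _ _ hσp hρp _ _ _ ht0]
  refine ⟨v, hli2, fun l => ⟨h1 l, fun i => ?_⟩⟩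
  beta_reduce
  rw [← Real.rpow_mul ht0.le]
  exact h2 l i

lemma ereal_fin {X Y : EReal} (hX : 0 ≤ X) (hY : 0 ≤ Y)
    (h : ∀ γ : ℝ, 0 < γ → ((γ : EReal) ≤ X ↔ Y ≤ ((γ⁻¹ : ℝ) : EReal))) :
    (∀ a b : ℝ, X = a → Y = b → a * b = 1) ∧ (X = 0 ↔ Y = ⊤) ∧ (X = ⊤ ↔ Y = 0) := by
  have h' : ∀ c : ℝ, 0 < c → Y ≤ c → ((c⁻¹ : ℝ) : EReal) ≤ X := by
    intro c hc hYc
    exact (h c⁻¹ (inv_pos.mpr hc)).mpr (by rwa [inv_inv])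
  have hX0 : X = 0 → Y = ⊤ := by
    intro hx
    by_contra hy
    obtain ⟨b, hb1, hb2⟩ := EReal.lt_iff_exists_real_btwn.mp (lt_top_iff_ne_top.mpr hy)
    have hb0 : 0 < b := by exact_mod_cast hY.trans_lt hb1
    have := h' b hb0 hb1.le
    rw [hx] at this
    have h2 : b⁻¹ ≤ 0 := by exact_mod_cast this
    exact absurd (inv_pos.mpr hb0) (not_lt.mpr h2)
  refine ⟨?_, ⟨hX0, ?_⟩, ⟨?_, ?_⟩⟩
  · intro a b ha hb
    have ha0 : 0 < a := by
      have h1 : 0 ≤ a := by rw [ha] at hX; exact_mod_cast hX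
      refine lt_of_le_of_ne h1 fun h2 => ?_
      have := hX0 (by rw [ha, ← h2]; rfl)
      rw [hb] at this
      exact EReal.coe_ne_top b this
    have hb0 : 0 ≤ b := by rw [hb] at hY; exact_mod_cast hY
    have h1 : b ≤ a⁻¹ := by
      have := (h a ha0).mp ha.ge
      rw [hb] at this; exact_mod_cast this
    have h2 : a⁻¹ ≤ b := by
      by_contra hcon
      obtain ⟨c, hc1, hc2⟩ := exists_between (not_le.mp hcon)
      have hc0 := hb0.trans_lt hc1
      have := h' c hc0 (by rw [hb]; exact_mod_cast hc1.le)
      rw [ha] at this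
      have h3 : c⁻¹ ≤ a := by exact_mod_cast this
      have := inv_le_of_inv_le₀ hc0 h3
      linarith
    rw [le_antisymm h1 h2, mul_inv_cancel₀ ha0.ne']
  · intro hy
    by_contra hx
    obtain ⟨c, hc1, hc2⟩ := EReal.lt_iff_exists_real_btwn.mp (lt_of_le_of_ne hX (Ne.symm hx))
    have := (h c (by exact_mod_cast hc1)).mp hc2.le
    rw [hy] at this
    exact absurd (top_le_iff.mp this) (EReal.coe_ne_top _)
  · intro hx
    by_contra hy
    obtain ⟨c, hc1, hc2⟩ := EReal.lt_iff_exists_real_btwn.mp (lt_of_le_of_ne hY (Ne.symm hy))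
    have := (h c⁻¹ (inv_pos.mpr (by exact_mod_cast hc1))).mp (by rw [hx]; exact le_top)
    rw [inv_inv] at this
    exact absurd hc2 (not_lt.mpr this)
  · intro hy
    rw [EReal.eq_top_iff_forall_lt]
    intro y
    have h1 : (0:ℝ) < |y| + 1 := by positivity
    have := (h (|y| + 1) h1).mpr (by rw [hy]; exact_mod_cast (inv_pos.mpr h1).le)
    refine lt_of_lt_of_le ?_ this
    have : y < |y| + 1 := by linarith [le_abs_self y]
    exact_mod_cast this

theorem stmt14 {m n : ℕ} (Θ : Matrix (Fin (n + 1)) (Fin (m + 1)) ℝ)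
    (σ : Fin (m + 1) → ℝ) (ρ : Fin (n + 1) → ℝ)
    (hσa : Antitone σ) (hρa : Antitone ρ)
    (hσp : ∀ j, 0 < σ j) (hρp : ∀ i, 0 < ρ i)
    (hσs : ∑ j, σ j = 1) (hρs : ∑ i, ρ i = 1)
    (k : ℕ) (hk1 : 1 ≤ k) (hkd : k ≤ m + 1 + (n + 1)) :
    (∀ γ : ℝ, 0 < γ →
      (((γ : EReal) ≤ omegaK Θ σ ρ k ↔
        omegaHatK Θ.transpose ρ σ (m + 1 + (n + 1) + 1 - k) ≤ ((γ⁻¹ : ℝ) : EReal)) ∧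
      ((γ : EReal) ≤ omegaHatK Θ σ ρ k ↔
        omegaK Θ.transpose ρ σ (m + 1 + (n + 1) + 1 - k) ≤ ((γ⁻¹ : ℝ) : EReal)))) ∧
    (∀ a b : ℝ, omegaK Θ σ ρ k = (a : EReal) →
      omegaHatK Θ.transpose ρ σ (m + 1 + (n + 1) + 1 - k) = (b : EReal) → a * b = 1) ∧
    (∀ a b : ℝ, omegaHatK Θ σ ρ k = (a : EReal) →
      omegaK Θ.transpose ρ σ (m + 1 + (n + 1) + 1 - k) = (b : EReal) → a * b = 1) ∧
    (omegaK Θ σ ρ k = 0 ↔ omegaHatK Θ.transpose ρ σ (m + 1 + (n + 1) + 1 - k) = ⊤) ∧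
    (omegaK Θ σ ρ k = ⊤ ↔ omegaHatK Θ.transpose ρ σ (m + 1 + (n + 1) + 1 - k) = 0) ∧
    (omegaHatK Θ σ ρ k = 0 ↔ omegaK Θ.transpose ρ σ (m + 1 + (n + 1) + 1 - k) = ⊤) ∧
    (omegaHatK Θ σ ρ k = ⊤ ↔ omegaK Θ.transpose ρ σ (m + 1 + (n + 1) + 1 - k) = 0) := by
  have hkd' : m + 1 + (n + 1) + 1 - k ≤ n + 1 + (m + 1) := by omega
  have hcore := order_core (P := solvK Θ σ ρ k)
    (Q := solvK Θ.transpose ρ σ (m + 1 + (n + 1) + 1 - k))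
    (fun γ δ s => ev_easy Θ σ ρ hσp hρp k _ (by omega) γ δ s)
    (fun γ δ s => ev_hard Θ σ ρ hσp hρp k hk1 hkd γ δ s)
  have nP := ev_neg Θ σ ρ hσp hρp k hkd
  have nQ := ev_neg Θ.transpose ρ σ hρp hσp (m + 1 + (n + 1) + 1 - k) hkd'
  obtain ⟨a1, a2, a3⟩ := ereal_fin (supI_nonneg nP) (supH_nonneg nQ) (fun γ hγ => (hcore γ hγ).1)
  obtain ⟨b1, b2, b3⟩ := ereal_fin (supH_nonneg nP) (supI_nonneg nQ) (fun γ hγ => (hcore γ hγ).2)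
  exact ⟨hcore, a1, b1, a2, a3, b2, b3⟩
end
end

section
/- For every η ∈ ℝ^n one has ω_{σ,ρ}(Θ,η) ≥ ω^{(d)}_{σ,ρ}(Θ) and ω̂_{σ,ρ}(Θ,η) ≥ ω̂^{(d)}_{σ,ρ}(Θ). -/
open Filter

noncomputable section

/-- The inhomogeneous weighted Diophantine exponent `ω_{σ,ρ}(Θ, η)`. -/
def omegaInhom {m n : ℕ} (Θ : Matrix (Fin n) (Fin m) ℝ) (σ : Fin m → ℝ) (ρ : Fin n → ℝ)
    (η : Fin n → ℝ) : EReal :=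
  sSup (Real.toEReal '' {γ : ℝ | ∀ T : ℝ, ∃ t > T,
    ∃ (x : Fin m → ℤ) (y : Fin n → ℤ), (x, y) ≠ 0 ∧
      wnorm σ (fun j => (x j : ℝ)) ≤ t ∧
      wnorm ρ (fun i => Θ.mulVec (fun j => (x j : ℝ)) i - (y i : ℝ) - η i) ≤ t ^ (-γ)})

/-- The inhomogeneous uniform weighted Diophantine exponent `ω̂_{σ,ρ}(Θ, η)`. -/
def omegaHatInhom {m n : ℕ} (Θ : Matrix (Fin n) (Fin m) ℝ) (σ : Fin m → ℝ) (ρ : Fin n → ℝ)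
    (η : Fin n → ℝ) : EReal :=
  sSup (Real.toEReal '' {γ : ℝ | ∃ T : ℝ, ∀ t > T,
    ∃ (x : Fin m → ℤ) (y : Fin n → ℤ), (x, y) ≠ 0 ∧
      wnorm σ (fun j => (x j : ℝ)) ≤ t ∧
      wnorm ρ (fun i => Θ.mulVec (fun j => (x j : ℝ)) i - (y i : ℝ) - η i) ≤ t ^ (-γ)})

lemma wnorm_le_iff_aux {k : ℕ} (w : Fin (k + 1) → ℝ) (hw : ∀ j, 0 < w j) (x : Fin (k + 1) → ℝ)
    {t : ℝ} (ht : 0 ≤ t) : wnorm w x ≤ t ↔ ∀ j, |x j| ≤ t ^ (w j) := by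
  have key : ∀ j, |x j| ^ ((1 : ℝ) / w j) ≤ t ↔ |x j| ≤ t ^ (w j) := by
    intro j
    rw [one_div]
    exact Real.rpow_inv_le_iff_of_pos (abs_nonneg _) ht (hw j)
  unfold wnorm
  constructor
  · intro h j
    rw [← key]
    exact (le_ciSup (f := fun j => |x j| ^ ((1 : ℝ) / w j)) (Set.finite_range _).bddAbove j).trans h
  · intro h
    exact ciSup_le fun j => (key j).2 (h j)

/-- Rounding the target point to the lattice spanned by independent integer vectors. -/
lemma exists_round_aux {m n : ℕ} (v : Fin (m + 1 + (n + 1)) → (Fin (m + 1) → ℤ) × (Fin (n + 1) → ℤ))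
    (hv : LinearIndependent ℤ v) (η : Fin (n + 1) → ℝ) :
    ∃ (k : Fin (m + 1 + (n + 1)) → ℤ) (c : Fin (m + 1 + (n + 1)) → ℝ),
      (∀ l, |(k l : ℝ) - c l| ≤ 1) ∧ (∑ l, k l • v l ≠ 0) ∧
      (∀ j, ∑ l, c l * ((v l).1 j : ℝ) = 0) ∧ (∀ i, ∑ l, c l * ((v l).2 i : ℝ) = - η i) := by
  let M : Matrix (Fin (m + 1 + (n + 1))) (Fin (m + 1 + (n + 1))) ℤ :=
    Matrix.of fun l => Fin.append (v l).1 (v l).2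
  have hdet : M.det ≠ 0 := by
    intro h0
    obtain ⟨g, hg, hg0⟩ := Matrix.exists_vecMul_eq_zero_iff.2 h0
    apply hg
    have := Fintype.linearIndependent_iff.1 hv g ?_
    · exact funext this
    · ext j
      · have := congrFun hg0 (Fin.castAdd _ j)
        simpa [M, Matrix.vecMul, dotProduct, Prod.fst_sum, Finset.sum_apply] using this
      · have := congrFun hg0 (Fin.natAdd _ j)
        simpa [M, Matrix.vecMul, dotProduct, Prod.snd_sum, Finset.sum_apply] using this
  let R := M.map (Int.cast : ℤ → ℝ)
  have hR : IsUnit R.det := by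
    rw [isUnit_iff_ne_zero]
    have : R.det = (M.det : ℝ) := by
      have := (Int.castRingHom ℝ).map_det M
      simpa [R] using this.symm
    rw [this]
    exact_mod_cast hdet
  let z : Fin (m + 1 + (n + 1)) → ℝ := Fin.append (fun _ => 0) (fun i => - η i)
  let c := Matrix.vecMul z R⁻¹
  have hc : Matrix.vecMul c R = z := by
    simp only [c, Matrix.vecMul_vecMul, Matrix.nonsing_inv_mul R hR, Matrix.vecMul_one]
  have hk : ∀ r : ℝ, ∃ k : ℤ, k ≠ 0 ∧ |(k : ℝ) - r| ≤ 1 := by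
    intro r
    have h1 := Int.floor_le r
    have h2 := Int.lt_floor_add_one r
    by_cases h : ⌊r⌋ = 0
    · refine ⟨1, one_ne_zero, ?_⟩
      rw [h] at h1 h2
      push_cast at *
      rw [abs_le]; constructor <;> linarith
    · refine ⟨⌊r⌋, h, ?_⟩
      rw [abs_le]; constructor <;> linarith
  choose f hf0 hf1 using hk
  refine ⟨fun l => f (c l), c, fun l => hf1 _, ?_, ?_, ?_⟩
  · intro h
    exact hf0 _ (Fintype.linearIndependent_iff.1 hv _ h 0)
  · intro j
    have := congrFun hc (Fin.castAdd _ j)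
    simpa [R, M, z, Matrix.vecMul, dotProduct] using this
  · intro j
    have := congrFun hc (Fin.natAdd _ j)
    simpa [R, M, z, Matrix.vecMul, dotProduct] using this

lemma sum_bound_aux {N : ℕ} (k : Fin N → ℤ) (c : Fin N → ℝ) (hkc : ∀ l, |(k l : ℝ) - c l| ≤ 1)
    (a : Fin N → ℝ) (b : ℝ) (ha : ∀ l, |a l| ≤ b) :
    |∑ l, ((k l : ℝ) - c l) * a l| ≤ N * b := by
  calc |∑ l, ((k l : ℝ) - c l) * a l| ≤ ∑ l, |((k l : ℝ) - c l) * a l| :=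
        Finset.abs_sum_le_sum_abs _ _
    _ ≤ ∑ _l : Fin N, b := by
        refine Finset.sum_le_sum fun l _ => ?_
        rw [abs_mul]
        calc _ ≤ 1 * |a l| := mul_le_mul_of_nonneg_right (hkc l) (abs_nonneg _)
          _ ≤ b := by rw [one_mul]; exact ha l
    _ = N * b := by simp

lemma exists_const_aux {k : ℕ} (w : Fin k → ℝ) (hw : ∀ j, 0 < w j) (D : ℝ) :
    ∃ C₀ : ℝ, ∀ C, C₀ ≤ C → ∀ j, D ≤ C ^ (w j) := by
  have : ∀ᶠ C : ℝ in atTop, ∀ j, D ≤ C ^ (w j) := by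
    rw [eventually_all]
    intro j
    exact (tendsto_rpow_atTop (hw j)).eventually_ge_atTop D
  exact eventually_atTop.1 this

lemma transfer_aux {m n : ℕ} (Θ : Matrix (Fin (n + 1)) (Fin (m + 1)) ℝ)
    (σ : Fin (m + 1) → ℝ) (ρ : Fin (n + 1) → ℝ)
    (hσp : ∀ j, 0 < σ j) (hρp : ∀ i, 0 < ρ i)
    (η : Fin (n + 1) → ℝ) (γ γ' : ℝ) (hγ : γ' < γ) :
    ∃ C > (0 : ℝ), ∃ T₀ : ℝ, ∀ t > T₀, solvK Θ σ ρ (m + 1 + (n + 1)) γ t →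
      ∃ (x : Fin (m + 1) → ℤ) (y : Fin (n + 1) → ℤ), (x, y) ≠ 0 ∧
      wnorm σ (fun j => (x j : ℝ)) ≤ C * t ∧
      wnorm ρ (fun i => Θ.mulVec (fun j => (x j : ℝ)) i - (y i : ℝ) - η i) ≤ (C * t) ^ (-γ') := by
  obtain ⟨C₁, hC₁⟩ := exists_const_aux σ hσp ((m + 1 + (n + 1) : ℕ) : ℝ)
  obtain ⟨C₂, hC₂⟩ := exists_const_aux ρ hρp ((m + 1 + (n + 1) : ℕ) : ℝ)
  obtain ⟨C, hC, h1, h2⟩ : ∃ C : ℝ, 0 < C ∧ C₁ ≤ C ∧ C₂ ≤ C :=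
    ⟨max 1 (max C₁ C₂), by positivity, by simp, by simp⟩
  have hσC := hC₁ C h1
  have hρC := hC₂ C h2
  obtain ⟨T₁, hT₁⟩ := eventually_atTop.1
    ((tendsto_rpow_atTop (sub_pos.2 hγ)).eventually_ge_atTop (C ^ (1 + γ')))
  refine ⟨C, hC, max 0 T₁, fun t ht hs => ?_⟩
  have ht0 : 0 < t := lt_of_le_of_lt (le_max_left _ _) ht
  have hCt : C * t ^ (-γ) ≤ (C * t) ^ (-γ') := by
    have := hT₁ t (le_of_lt (lt_of_le_of_lt (le_max_right _ _) ht))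
    rw [Real.mul_rpow hC.le ht0.le]
    have e1 : C = C ^ (1 + γ') * C ^ (-γ') := by
      rw [← Real.rpow_add hC]; simp
    have e2 : t ^ (-γ') = t ^ (γ - γ') * t ^ (-γ) := by
      rw [← Real.rpow_add ht0]; ring_nf
    calc C * t ^ (-γ) = C ^ (1 + γ') * (C ^ (-γ') * t ^ (-γ)) := by
          rw [← mul_assoc, ← e1]
      _ ≤ t ^ (γ - γ') * (C ^ (-γ') * t ^ (-γ)) :=
          mul_le_mul_of_nonneg_right this (by positivity)
      _ = C ^ (-γ') * t ^ (-γ') := by rw [e2]; ring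
  obtain ⟨v, hv, hb⟩ := hs
  obtain ⟨k, c, hkc, hne, hx, hy⟩ := exists_round_aux v hv η
  have hb1 : ∀ l j, |((v l).1 j : ℝ)| ≤ t ^ σ j := fun l =>
    (wnorm_le_iff_aux σ hσp _ ht0.le).1 (hb l).1
  have hb2 : ∀ l i, |Θ.mulVec (fun j => ((v l).1 j : ℝ)) i - ((v l).2 i : ℝ)| ≤ (t ^ (-γ)) ^ ρ i :=
    fun l => (wnorm_le_iff_aux ρ hρp _ (by positivity)).1 (hb l).2
  refine ⟨(∑ l, k l • v l).1, (∑ l, k l • v l).2, hne, ?_, ?_⟩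
  · rw [wnorm_le_iff_aux σ hσp _ (by positivity)]
    intro j
    have e : (((∑ l, k l • v l).1 j : ℤ) : ℝ) = ∑ l, ((k l : ℝ) - c l) * ((v l).1 j : ℝ) := by
      simp only [sub_mul, Finset.sum_sub_distrib, hx]
      simp [Prod.fst_sum, Finset.sum_apply]
    rw [e, Real.mul_rpow hC.le ht0.le]
    refine (sum_bound_aux k c hkc _ _ fun l => hb1 l j).trans ?_
    exact mul_le_mul_of_nonneg_right (hσC j) (by positivity)
  · refine le_trans ?_ hCt
    rw [wnorm_le_iff_aux ρ hρp _ (by positivity)]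
    intro i
    have e : Θ.mulVec (fun j => (((∑ l, k l • v l).1 j : ℤ) : ℝ)) i
        - (((∑ l, k l • v l).2 i : ℤ) : ℝ) - η i
        = ∑ l, ((k l : ℝ) - c l) *
          (Θ.mulVec (fun j => ((v l).1 j : ℝ)) i - ((v l).2 i : ℝ)) := by
      have e1 : ∀ a : Fin (m + 1 + (n + 1)) → ℝ,
          ∑ l, a l * Θ.mulVec (fun j => ((v l).1 j : ℝ)) i
            = ∑ j, Θ i j * ∑ l, a l * ((v l).1 j : ℝ) := by
        intro a
        simp only [Matrix.mulVec, dotProduct, Finset.mul_sum]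
        rw [Finset.sum_comm]
        refine Finset.sum_congr rfl fun j _ => Finset.sum_congr rfl fun l _ => by ring
      have e2 : ∑ l, c l * Θ.mulVec (fun j => ((v l).1 j : ℝ)) i = 0 := by
        rw [e1]; simp [hx]
      have e3 : ∑ l, (k l : ℝ) * Θ.mulVec (fun j => ((v l).1 j : ℝ)) i
          = Θ.mulVec (fun j => (((∑ l, k l • v l).1 j : ℤ) : ℝ)) i := by
        rw [e1]
        simp [Prod.fst_sum, Finset.sum_apply, Matrix.mulVec, dotProduct]
      have e4 : ∑ l, (k l : ℝ) * ((v l).2 i : ℝ) = (((∑ l, k l • v l).2 i : ℤ) : ℝ) := by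
        simp [Prod.snd_sum, Finset.sum_apply]
      simp only [sub_mul, mul_sub, Finset.sum_sub_distrib]
      rw [e2, e3, e4, hy]
      ring
    rw [e, Real.mul_rpow hC.le (by positivity)]
    refine (sum_bound_aux k c hkc _ _ fun l => hb2 l i).trans ?_
    exact mul_le_mul_of_nonneg_right (hρC i) (by positivity)

lemma sSup_le_aux (A B : Set ℝ) (h : ∀ γ ∈ A, ∀ γ' < γ, γ' ∈ B) :
    sSup (Real.toEReal '' A) ≤ sSup (Real.toEReal '' B) := by
  refine sSup_le ?_
  rintro _ ⟨γ, hγ, rfl⟩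
  refine le_of_forall_lt fun c hc => ?_
  obtain ⟨γ', h1, h2⟩ := EReal.lt_iff_exists_real_btwn.1 hc
  exact h1.trans_le (le_sSup ⟨γ', h γ hγ γ' (EReal.coe_lt_coe_iff.1 h2), rfl⟩)

theorem stmt15 {m n : ℕ} (Θ : Matrix (Fin (n + 1)) (Fin (m + 1)) ℝ)
    (σ : Fin (m + 1) → ℝ) (ρ : Fin (n + 1) → ℝ)
    (hσa : Antitone σ) (hρa : Antitone ρ)
    (hσp : ∀ j, 0 < σ j) (hρp : ∀ i, 0 < ρ i)
    (hσs : ∑ j, σ j = 1) (hρs : ∑ i, ρ i = 1)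
    (η : Fin (n + 1) → ℝ) :
    omegaK Θ σ ρ (m + 1 + (n + 1)) ≤ omegaInhom Θ σ ρ η ∧
    omegaHatK Θ σ ρ (m + 1 + (n + 1)) ≤ omegaHatInhom Θ σ ρ η := by
  constructor
  · refine sSup_le_aux _ _ fun γ hγ γ' hlt => ?_
    obtain ⟨C, hC, T₀, h⟩ := transfer_aux Θ σ ρ hσp hρp η γ γ' hlt
    intro T
    obtain ⟨t, ht, hs⟩ := hγ (max T₀ (T / C))
    refine ⟨C * t, ?_, h t (lt_of_le_of_lt (le_max_left _ _) ht) hs⟩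
    have := lt_of_le_of_lt (le_max_right _ _) ht
    rw [div_lt_iff₀ hC] at this
    linarith
  · refine sSup_le_aux _ _ fun γ hγ γ' hlt => ?_
    obtain ⟨C, hC, T₀, h⟩ := transfer_aux Θ σ ρ hσp hρp η γ γ' hlt
    obtain ⟨T, hT⟩ := hγ
    refine ⟨C * max T₀ T, fun t ht => ?_⟩
    have h1 : max T₀ T < t / C := by
      rw [lt_div_iff₀ hC]; linarith
    have := h (t / C) (lt_of_le_of_lt (le_max_left _ _) h1)
      (hT _ (lt_of_le_of_lt (le_max_right _ _) h1))
    rwa [mul_div_cancel₀ _ hC.ne'] at this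
end
end

section
/- For every τ ∈ T: (a) for each k = 1,…,d−1 one has |τ|_+^{[k]} = ((d−k)/k)·|−τ|_+^{[d−k]}; (b) for each k = 1,…,d−1 one has (k(d−k−1)/((d−k)(k+1)))·|τ|_+^{[k]} ≤ |τ|_+^{[k+1]} ≤ |τ|_+^{[k]}. -/
noncomputable section

/-- `|τ|_+^[k]`: the maximum of `(τ_{i₁} + ⋯ + τ_{i_k})/k` over all `k`-element
index subsets `{i₁ < … < i_k} ⊆ {1, …, d}`. -/
def tauPlusK (d k : ℕ) (τ : Fin d → ℝ) : ℝ :=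
  sSup ((fun S : Finset (Fin d) => (∑ i ∈ S, τ i) / (k : ℝ)) '' {S | S.card = k})

theorem tauPlusK_exists (d k : ℕ) (τ : Fin d → ℝ) (hk : k ≤ d) :
    ∃ S : Finset (Fin d), S.card = k ∧ tauPlusK d k τ = (∑ i ∈ S, τ i) / (k : ℝ) := by
  have hne : ((fun S : Finset (Fin d) => (∑ i ∈ S, τ i) / (k : ℝ)) ''
      {S | S.card = k}).Nonempty := by
    obtain ⟨S, -, hS⟩ := Finset.exists_subset_card_eq
      (s := (Finset.univ : Finset (Fin d))) (n := k) (by simpa using hk)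
    exact ⟨_, S, hS, rfl⟩
  obtain ⟨S, hS, h⟩ := hne.csSup_mem (Set.toFinite _)
  exact ⟨S, hS, h.symm⟩

theorem tauPlusK_ge (d k : ℕ) (hk : 1 ≤ k) (τ : Fin d → ℝ) (S : Finset (Fin d))
    (hS : S.card = k) : ∑ i ∈ S, τ i ≤ k * tauPlusK d k τ := by
  have h : (∑ i ∈ S, τ i) / (k : ℝ) ≤ tauPlusK d k τ :=
    le_csSup (Set.toFinite _).bddAbove ⟨S, hS, rfl⟩
  have hk' : (0 : ℝ) < k := by exact_mod_cast hk
  rwa [div_le_iff₀' hk'] at h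

theorem tauPlusK_max (d k : ℕ) (hk : 1 ≤ k) (τ : Fin d → ℝ) (hkd : k ≤ d) :
    ∃ S : Finset (Fin d), S.card = k ∧ k * tauPlusK d k τ = ∑ i ∈ S, τ i := by
  obtain ⟨S, hS, h⟩ := tauPlusK_exists d k τ hkd
  have hk' : (0 : ℝ) < k := by exact_mod_cast hk
  exact ⟨S, hS, by rw [h]; field_simp⟩

theorem tauPlusK_compl (d : ℕ) (τ : Fin d → ℝ) (hτ : ∑ i, τ i = 0) (k : ℕ) (hk : 1 ≤ k)
    (hkd : k + 1 ≤ d) :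
    k * tauPlusK d k τ ≤ (d - k : ℕ) * tauPlusK d (d - k) (-τ) := by
  obtain ⟨S, hS, h⟩ := tauPlusK_max d k hk τ (by omega)
  have h1 := tauPlusK_ge d (d - k) (by omega) (-τ) Sᶜ (by simp [Finset.card_compl, hS])
  have h2 := Finset.sum_add_sum_compl S τ
  simp only [Pi.neg_apply, Finset.sum_neg_distrib] at h1
  linarith

theorem stmt16 (d : ℕ) (hd : 2 ≤ d) (τ : Fin d → ℝ) (hτ : ∑ i, τ i = 0) :
    (∀ k : ℕ, 1 ≤ k → k ≤ d - 1 →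
      tauPlusK d k τ = (((d : ℝ) - k) / k) * tauPlusK d (d - k) (-τ)) ∧
    (∀ k : ℕ, 1 ≤ k → k ≤ d - 1 →
      ((k : ℝ) * ((d : ℝ) - k - 1) / (((d : ℝ) - k) * ((k : ℝ) + 1))) * tauPlusK d k τ ≤
        tauPlusK d (k + 1) τ ∧
      tauPlusK d (k + 1) τ ≤ tauPlusK d k τ) := by
  refine ⟨fun k hk hkd => ?_, fun k hk hkd => ?_⟩
  · have hkd' : k + 1 ≤ d := by omega
    have h1 := tauPlusK_compl d τ hτ k hk hkd'
    have h2 := tauPlusK_compl d (-τ) (by simp [hτ]) (d - k) (by omega) (by omega)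
    rw [neg_neg, Nat.sub_sub_self (by omega)] at h2
    rw [Nat.cast_sub (by omega)] at h1 h2
    have hk' : (0 : ℝ) < k := by exact_mod_cast hk
    have h3 := le_antisymm h1 h2
    rw [div_mul_eq_mul_div, eq_div_iff hk'.ne']
    linarith
  · have hkd' : k + 1 ≤ d := by omega
    have hk' : (0 : ℝ) < k := by exact_mod_cast hk
    have hdk : (0 : ℝ) < (d : ℝ) - k := by
      have : (k : ℝ) + 1 ≤ d := by exact_mod_cast hkd'
      linarith
    constructor
    · obtain ⟨S, hS, h⟩ := tauPlusK_max d k hk τ (by omega)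
      have h1 : ∑ i ∈ Sᶜ, (τ i + ∑ j ∈ S, τ j) ≤
          ∑ i ∈ Sᶜ, ((k + 1 : ℕ) : ℝ) * tauPlusK d (k + 1) τ := by
        refine Finset.sum_le_sum fun i hi => ?_
        rw [Finset.mem_compl] at hi
        rw [← Finset.sum_insert hi]
        exact tauPlusK_ge d (k + 1) (by omega) τ _ (by rw [Finset.card_insert_of_notMem hi, hS])
      have h2 := Finset.sum_add_sum_compl S τ
      rw [Finset.sum_add_distrib, Finset.sum_const, Finset.sum_const, Finset.card_compl, hS,
        Fintype.card_fin, nsmul_eq_mul, nsmul_eq_mul, Nat.cast_sub (by omega), ← h] at h1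
      rw [← h] at h2
      push_cast at h1
      rw [div_mul_eq_mul_div, div_le_iff₀ (by positivity)]
      linarith
    · obtain ⟨S, hS, h⟩ := tauPlusK_max d (k + 1) (by omega) τ (by omega)
      have h1 : ∑ i ∈ S, (∑ j ∈ S, τ j - τ i) ≤ ∑ i ∈ S, (k : ℝ) * tauPlusK d k τ := by
        refine Finset.sum_le_sum fun i hi => ?_
        have := Finset.sum_erase_add S τ hi
        have := tauPlusK_ge d k hk τ (S.erase i) (by rw [Finset.card_erase_of_mem hi, hS]; simp)
        linarith
      rw [Finset.sum_sub_distrib, Finset.sum_const, Finset.sum_const, hS,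
        nsmul_eq_mul, nsmul_eq_mul, ← h] at h1
      push_cast at h1
      have hp : (0 : ℝ) < (k + 1) * k := by positivity
      refine le_of_mul_le_mul_left ?_ hp
      linarith
end
end

section
/- Let Λ be a unimodular lattice in ℝ^d and f(τ) = |τ|_+. Then for every k ∈ {1,…,d}: (a) ω_k(Λ) ≥ ω̂_k(Λ) ≥ −1 + 1/d; (b) −1 ≤ ψ̲_k(Λ,f) ≤ ψ̄_k(Λ,f) ≤ d−1; (c) for every real γ > −1, ω_k(Λ) ≥ γ if and only if ψ̲_k(Λ,f) ≤ −γ/(1+γ), and ω̂_k(Λ) ≥ γ if and only if ψ̄_k(Λ,f) ≤ −γ/(1+γ); consequently (1+ω_k(Λ))(1+ψ̲_k(Λ,f)) = 1 and (1+ω̂_k(Λ))(1+ψ̄_k(Λ,f)) = 1, with the convention that ω_k(Λ) = +∞ when ψ̲_k(Λ,f) = −1 and ω̂_k(Λ) = +∞ when ψ̄_k(Λ,f) = −1. -/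
open Filter

noncomputable section

/-- A unimodular lattice in `ℝ^d`: the set of integer linear combinations of a basis of `ℝ^d`
whose matrix has determinant `±1`. -/
def IsUnimodularLattice (d : ℕ) (Λ : Set (Fin d → ℝ)) : Prop :=
  ∃ B : Matrix (Fin d) (Fin d) ℝ, |B.det| = 1 ∧
    Λ = {v | ∃ x : Fin d → ℤ, v = B.mulVec fun i => (x i : ℝ)}

/-- The dual lattice `Λ* = {w : ⟨w, z⟩ ∈ ℤ for all z ∈ Λ}`. -/
def dualLattice (d : ℕ) (Λ : Set (Fin d → ℝ)) : Set (Fin d → ℝ) :=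
  {w | ∀ z ∈ Λ, ∃ c : ℤ, ∑ i, w i * z i = (c : ℝ)}

/-- The filter on `ℝ^d` of `τ ∈ T` (i.e. `∑ τ_i = 0`) with `|τ| = max_i |τ_i| → ∞`. -/
def Tfilter (d : ℕ) : Filter (Fin d → ℝ) :=
  (Filter.atTop.comap fun τ : Fin d → ℝ => ⨆ i, |τ i|) ⊓
    Filter.principal {τ | ∑ i, τ i = 0}

/-- `ψ̲_k(Λ, f)` for `f(τ) = |τ|_+ = max_i τ_i`: the liminf of `L_k(Λ,τ)/|τ|_+` over
`τ ∈ T` with `|τ| → ∞`. -/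
def psiLowF (d : ℕ) (Λ : Set (Fin d → ℝ)) (k : ℕ) : ℝ :=
  liminf (fun τ : Fin d → ℝ => Lk d Λ τ k / ⨆ i, τ i) (Tfilter d)

/-- `ψ̄_k(Λ, f)` for `f(τ) = |τ|_+ = max_i τ_i`: the limsup of `L_k(Λ,τ)/|τ|_+` over
`τ ∈ T` with `|τ| → ∞`. -/
def psiUpF (d : ℕ) (Λ : Set (Fin d → ℝ)) (k : ℕ) : ℝ :=
  limsup (fun τ : Fin d → ℝ => Lk d Λ τ k / ⨆ i, τ i) (Tfilter d)

/-- `Π(z) = ∏ i, |z_i|^(1/d)`. -/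
def PiProd (d : ℕ) (z : Fin d → ℝ) : ℝ := ∏ i, |z i| ^ ((1 : ℝ) / d)

/-- The supremum norm `|z| = max_i |z_i|`. -/
def supNorm {d : ℕ} (z : Fin d → ℝ) : ℝ := ⨆ i, |z i|

/-- The box `P(v) = {z : |z_i| ≤ v_i}` contains `k` linearly independent points of `Λ`. -/
def containsK (d : ℕ) (Λ : Set (Fin d → ℝ)) (v : Fin d → ℝ) (k : ℕ) : Prop :=
  ∃ w : Fin k → (Fin d → ℝ), (∀ l, w l ∈ Λ) ∧ LinearIndependent ℝ w ∧
    ∀ l i, |w l i| ≤ v i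

/-- The `k`-th Diophantine exponent `ω_k(Λ)` of a lattice. -/
def omegaLatK (d : ℕ) (Λ : Set (Fin d → ℝ)) (k : ℕ) : EReal :=
  sSup (Real.toEReal '' {γ : ℝ | ∀ T : ℝ, ∃ v : Fin d → ℝ, (∀ i, 0 < v i) ∧
    PiProd d v = supNorm v ^ (-γ) ∧ T < supNorm v ∧ containsK d Λ v k})

/-- The `k`-th uniform Diophantine exponent `ω̂_k(Λ)` of a lattice. -/
def omegaLatHatK (d : ℕ) (Λ : Set (Fin d → ℝ)) (k : ℕ) : EReal :=
  sSup (Real.toEReal '' {γ : ℝ | ∃ T : ℝ, ∀ v : Fin d → ℝ, (∀ i, 0 < v i) →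
    PiProd d v = supNorm v ^ (-γ) → T < supNorm v → containsK d Λ v k})

theorem aux_Fle {d : ℕ} (τ : Fin d → ℝ) (i : Fin d) : τ i ≤ ⨆ i, τ i :=
  le_ciSup (Set.finite_range τ).bddAbove i

theorem aux_neg_le {d : ℕ} (τ : Fin d → ℝ) (h : ∑ i, τ i = 0) (i : Fin d) :
    - τ i ≤ ((d : ℝ) - 1) * ⨆ i, τ i := by
  have h1 : τ i + ∑ j ∈ Finset.univ.erase i, τ j = 0 := by
    rw [Finset.add_sum_erase _ _ (Finset.mem_univ i), h]
  have h2 : ∑ j ∈ Finset.univ.erase i, τ j ≤ (Finset.univ.erase i).card • (⨆ i, τ i) :=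
    Finset.sum_le_card_nsmul _ _ _ (fun j _ => aux_Fle τ j)
  have hd : 1 ≤ d := by have := i.2; omega
  rw [Finset.card_erase_of_mem (Finset.mem_univ i), Finset.card_univ, Fintype.card_fin,
    nsmul_eq_mul, Nat.cast_sub hd, Nat.cast_one] at h2
  linarith

theorem aux_abs_le {d : ℕ} (hd : 2 ≤ d) (τ : Fin d → ℝ) (h : ∑ i, τ i = 0) :
    (⨆ i, |τ i|) ≤ ((d : ℝ) - 1) * ⨆ i, τ i := by
  have : Nonempty (Fin d) := ⟨⟨0, by omega⟩⟩
  have hd' : (2 : ℝ) ≤ d := by exact_mod_cast hd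
  have h0 : 0 ≤ ⨆ i, τ i := by
    by_contra hc
    push Not at hc
    have : ∑ i, τ i < ∑ i : Fin d, (0 : ℝ) :=
      Finset.sum_lt_sum_of_nonempty Finset.univ_nonempty
        (fun i _ => lt_of_le_of_lt (aux_Fle τ i) hc)
    simp [h] at this
  refine ciSup_le fun i => abs_le.2 ⟨?_, ?_⟩
  · linarith [aux_neg_le τ h i]
  · nlinarith [aux_Fle τ i]

theorem aux_le_abs {d : ℕ} (hd : 2 ≤ d) (τ : Fin d → ℝ) :
    (⨆ i, τ i) ≤ (⨆ i, |τ i|) := by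
  have : Nonempty (Fin d) := ⟨⟨0, by omega⟩⟩
  exact ciSup_le fun i => (le_abs_self _).trans (aux_Fle (fun i => |τ i|) i)

theorem aux_ev {d : ℕ} (hd : 2 ≤ d) (P : (Fin d → ℝ) → Prop) :
    (∀ᶠ τ in Tfilter d, P τ) ↔ ∃ M : ℝ, ∀ τ : Fin d → ℝ, ∑ i, τ i = 0 → M < (⨆ i, τ i) → P τ := by
  have hd' : (2 : ℝ) ≤ d := by exact_mod_cast hd
  unfold Tfilter
  rw [Filter.eventually_inf_principal, Filter.eventually_comap]
  constructor
  · intro h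
    obtain ⟨M, hM⟩ := Filter.eventually_atTop.1 h
    exact ⟨M, fun τ h0 hF => hM _ (hF.le.trans (aux_le_abs hd τ)) τ rfl h0⟩
  · rintro ⟨M, hM⟩
    filter_upwards [Filter.eventually_gt_atTop (((d : ℝ) - 1) * M)] with b hb τ hτ h0
    refine hM τ h0 ?_
    have := aux_abs_le hd τ h0
    rw [hτ] at this
    exact lt_of_mul_lt_mul_left (lt_of_lt_of_le hb this) (by linarith)

theorem aux_fr {d : ℕ} (hd : 2 ≤ d) (P : (Fin d → ℝ) → Prop) :
    (∃ᶠ τ in Tfilter d, P τ) ↔ ∀ M : ℝ, ∃ τ : Fin d → ℝ, ∑ i, τ i = 0 ∧ M < (⨆ i, τ i) ∧ P τ := by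
  unfold Filter.Frequently
  rw [aux_ev hd]
  push Not
  rfl

theorem aux_neBot {d : ℕ} (hd : 2 ≤ d) : (Tfilter d).NeBot := by
  rw [← Filter.frequently_true_iff_neBot, aux_fr hd]
  intro M
  let a : Fin d := ⟨0, by omega⟩
  let b : Fin d := ⟨1, by omega⟩
  have hab : a ≠ b := by simp [a, b]
  refine ⟨Pi.single a (M + 1) + Pi.single b (-(M + 1)), ?_, ?_, trivial⟩
  · simp [Finset.sum_add_distrib]
  · refine lt_of_lt_of_le ?_ (aux_Fle _ a)
    simp [hab]

/-- lower discreteness constant -/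
theorem aux_disc {d : ℕ} (Λ : Set (Fin d → ℝ)) (hΛ : IsUnimodularLattice d Λ) :
    ∃ c : ℝ, 0 < c ∧ ∀ z ∈ Λ, z ≠ 0 → ∀ r : ℝ, (∀ i, |z i| ≤ r) → c ≤ r := by
  obtain ⟨B, hB, rfl⟩ := hΛ
  have hu : IsUnit B.det := by
    rw [isUnit_iff_ne_zero]; intro h; simp [h] at hB
  set K : ℝ := 1 + ∑ j, ∑ i, |B⁻¹ j i| with hK
  have hKp : 0 < K := by positivity
  refine ⟨1 / K, by positivity, ?_⟩
  rintro z ⟨x, rfl⟩ hz r hr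
  have hx : x ≠ 0 := by
    rintro rfl
    apply hz
    have : (fun i : Fin d => (((0 : Fin d → ℤ) i : ℤ) : ℝ)) = 0 := by ext; simp
    rw [this, Matrix.mulVec_zero]
  obtain ⟨j, hj⟩ := Function.ne_iff.1 hx
  have hr0 : 0 ≤ r := (abs_nonneg _).trans (hr j)
  have h1 : (1 : ℝ) ≤ |(x j : ℝ)| := by
    have : (1 : ℤ) ≤ |x j| := Int.one_le_abs hj
    exact_mod_cast this
  have h2 : (x j : ℝ) = ∑ i, B⁻¹ j i * (B.mulVec fun i => (x i : ℝ)) i := by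
    have : B⁻¹.mulVec (B.mulVec fun i => (x i : ℝ)) = fun i => (x i : ℝ) := by
      rw [Matrix.mulVec_mulVec, Matrix.nonsing_inv_mul _ hu, Matrix.one_mulVec]
    exact (congrFun this j).symm
  have h3 : |(x j : ℝ)| ≤ K * r := by
    rw [h2]
    calc _ ≤ ∑ i, |B⁻¹ j i * (B.mulVec fun i => (x i : ℝ)) i| := Finset.abs_sum_le_sum_abs _ _
      _ ≤ ∑ i, |B⁻¹ j i| * r := by
        refine Finset.sum_le_sum fun i _ => ?_
        rw [abs_mul]
        exact mul_le_mul_of_nonneg_left (hr i) (abs_nonneg _)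
      _ = (∑ i, |B⁻¹ j i|) * r := by rw [Finset.sum_mul]
      _ ≤ K * r := by
        refine mul_le_mul_of_nonneg_right ?_ hr0
        have : ∑ i, |B⁻¹ j i| ≤ ∑ j, ∑ i, |B⁻¹ j i| :=
          Finset.single_le_sum (f := fun j => ∑ i, |B⁻¹ j i|)
            (fun j _ => by positivity) (Finset.mem_univ j)
        linarith
  rw [div_le_iff₀ hKp]
  linarith

theorem aux_big {d : ℕ} (Λ : Set (Fin d → ℝ)) (hΛ : IsUnimodularLattice d Λ) (k : ℕ)
    (hkd : k ≤ d) :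
    ∃ C : ℝ, 0 < C ∧ containsK d Λ (fun _ => C) k := by
  obtain ⟨B, hB, rfl⟩ := hΛ
  have hu : IsUnit B := by
    rw [Matrix.isUnit_iff_isUnit_det, isUnit_iff_ne_zero]; intro h; simp [h] at hB
  have hli : LinearIndependent ℝ B.col := Matrix.linearIndependent_cols_of_isUnit hu
  refine ⟨1 + ∑ j, ∑ i, |B j i|, by positivity, fun l => B.col (Fin.castLE hkd l), ?_, ?_, ?_⟩
  · intro l
    refine ⟨Pi.single (Fin.castLE hkd l) 1, ?_⟩
    have : (fun i => (((Pi.single (Fin.castLE hkd l) 1 : Fin d → ℤ) i : ℤ) : ℝ))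
        = Pi.single (Fin.castLE hkd l) 1 := by
      ext i
      by_cases h : i = Fin.castLE hkd l
      · subst h; simp
      · simp [h]
    rw [this, Matrix.mulVec_single_one]
  · exact hli.comp _ (Fin.castLE_injective hkd)
  · intro l i
    have h1 : |B i (Fin.castLE hkd l)| ≤ ∑ j, |B i j| :=
      Finset.single_le_sum (f := fun j => |B i j|) (fun j _ => abs_nonneg _) (Finset.mem_univ _)
    have h2 : ∑ j, |B i j| ≤ ∑ i, ∑ j, |B i j| :=
      Finset.single_le_sum (f := fun i => ∑ j, |B i j|) (fun j _ => by positivity)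
        (Finset.mem_univ _)
    show |B i (Fin.castLE hkd l)| ≤ _
    linarith

theorem aux_mono {d : ℕ} {Λ : Set (Fin d → ℝ)} {k : ℕ} {v w : Fin d → ℝ}
    (h : containsK d Λ v k) (hvw : ∀ i, v i ≤ w i) : containsK d Λ w k := by
  obtain ⟨x, h1, h2, h3⟩ := h
  exact ⟨x, h1, h2, fun l i => (h3 l i).trans (hvw i)⟩

theorem aux_succ_eq {d : ℕ} (Λ : Set (Fin d → ℝ)) (τ : Fin d → ℝ) (k : ℕ) :
    succMin d Λ τ k = sInf {lam : ℝ | 0 < lam ∧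
      containsK d Λ (fun i => lam * Real.exp (τ i)) k} := rfl

theorem aux_lower {d : ℕ} (Λ : Set (Fin d → ℝ)) (hΛ : IsUnimodularLattice d Λ) (k : ℕ)
    (hk : 1 ≤ k) :
    ∃ c : ℝ, 0 < c ∧ ∀ (τ : Fin d → ℝ) (lam : ℝ), 0 < lam →
      containsK d Λ (fun i => lam * Real.exp (τ i)) k → c * Real.exp (-(⨆ i, τ i)) ≤ lam := by
  obtain ⟨c, hc, h⟩ := aux_disc Λ hΛ
  refine ⟨c, hc, fun τ lam hl hK => ?_⟩
  obtain ⟨w, h1, h2, h3⟩ := hK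
  have := h (w ⟨0, hk⟩) (h1 _) (h2.ne_zero _) (lam * Real.exp (⨆ i, τ i)) (fun i =>
    (h3 _ i).trans (mul_le_mul_of_nonneg_left (Real.exp_le_exp.2 (aux_Fle τ i)) hl.le))
  rw [Real.exp_neg, ← div_eq_mul_inv, div_le_iff₀ (Real.exp_pos _)]
  exact this

theorem aux_succ_lower {d : ℕ} (Λ : Set (Fin d → ℝ)) (hΛ : IsUnimodularLattice d Λ) (k : ℕ)
    (hk : 1 ≤ k) (hkd : k ≤ d) :
    ∃ c C : ℝ, 0 < c ∧ 0 < C ∧ ∀ τ : Fin d → ℝ, ∑ i, τ i = 0 →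
      c * Real.exp (-(⨆ i, τ i)) ≤ succMin d Λ τ k ∧
      succMin d Λ τ k ≤ C * Real.exp (((d : ℝ) - 1) * ⨆ i, τ i) := by
  obtain ⟨c, hc, h⟩ := aux_lower Λ hΛ k hk
  obtain ⟨C, hC, hCK⟩ := aux_big Λ hΛ k hkd
  refine ⟨c, C, hc, hC, fun τ h0 => ?_⟩
  have hmem : C * Real.exp (((d : ℝ) - 1) * ⨆ i, τ i) ∈ {lam : ℝ | 0 < lam ∧
      containsK d Λ (fun i => lam * Real.exp (τ i)) k} := by
    refine ⟨by positivity, aux_mono hCK fun i => ?_⟩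
    rw [mul_assoc, ← Real.exp_add]
    have : 0 ≤ ((d : ℝ) - 1) * (⨆ i, τ i) + τ i := by linarith [aux_neg_le τ h0 i]
    nlinarith [Real.one_le_exp this]
  rw [aux_succ_eq]
  exact ⟨le_csInf ⟨_, hmem⟩ fun lam hl => h τ lam hl.1 hl.2,
    csInf_le ⟨0, fun x hx => hx.1.le⟩ hmem⟩

theorem aux_bounds {d : ℕ} (hd : 2 ≤ d) (Λ : Set (Fin d → ℝ)) (hΛ : IsUnimodularLattice d Λ)
    (k : ℕ) (hk : 1 ≤ k) (hkd : k ≤ d) (ε : ℝ) (hε : 0 < ε) :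
    ∀ᶠ τ in Tfilter d, -1 - ε ≤ Lk d Λ τ k / (⨆ i, τ i) ∧
      Lk d Λ τ k / (⨆ i, τ i) ≤ (d : ℝ) - 1 + ε := by
  obtain ⟨c, C, hc, hC, h⟩ := aux_succ_lower Λ hΛ k hk hkd
  rw [aux_ev hd]
  refine ⟨(|Real.log c| + |Real.log C|) / ε, fun τ h0 hM => ?_⟩
  obtain ⟨h1, h2⟩ := h τ h0
  set F := ⨆ i, τ i
  have hF : 0 < F := lt_of_le_of_lt (by positivity) hM
  rw [div_lt_iff₀ hε] at hM
  have hs : 0 < succMin d Λ τ k := lt_of_lt_of_le (by positivity) h1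
  have l1 := Real.log_le_log (by positivity) h1
  have l2 := Real.log_le_log hs h2
  rw [Real.log_mul hc.ne' (Real.exp_ne_zero _), Real.log_exp] at l1
  rw [Real.log_mul hC.ne' (Real.exp_ne_zero _), Real.log_exp] at l2
  have a1 := neg_abs_le (Real.log c)
  have a2 := le_abs_self (Real.log C)
  have a3 := abs_nonneg (Real.log c)
  have a4 := abs_nonneg (Real.log C)
  rw [le_div_iff₀ hF, div_le_iff₀ hF]
  unfold Lk
  constructor <;> nlinarith

/-- `g F` versus `L_k` -/
theorem aux_contains_le {d : ℕ} (Λ : Set (Fin d → ℝ)) (hΛ : IsUnimodularLattice d Λ)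
    (k : ℕ) (hk : 1 ≤ k) (hkd : k ≤ d) (τ : Fin d → ℝ) (h0 : ∑ i, τ i = 0) (hF : 0 < ⨆ i, τ i)
    (g : ℝ) (h : containsK d Λ (fun i => Real.exp (g * ⨆ i, τ i) * Real.exp (τ i)) k) :
    Lk d Λ τ k / (⨆ i, τ i) ≤ g := by
  obtain ⟨c, C, hc, hC, hb⟩ := aux_succ_lower Λ hΛ k hk hkd
  have hs : 0 < succMin d Λ τ k := lt_of_lt_of_le (by positivity) (hb τ h0).1
  rw [div_le_iff₀ hF, Lk, Real.log_le_iff_le_exp hs, aux_succ_eq]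
  exact csInf_le ⟨0, fun x hx => hx.1.le⟩ ⟨Real.exp_pos _, h⟩

theorem aux_contains_of_lt {d : ℕ} (Λ : Set (Fin d → ℝ)) (hΛ : IsUnimodularLattice d Λ)
    (k : ℕ) (hk : 1 ≤ k) (hkd : k ≤ d) (τ : Fin d → ℝ) (h0 : ∑ i, τ i = 0) (hF : 0 < ⨆ i, τ i)
    (g : ℝ) (h : Lk d Λ τ k / (⨆ i, τ i) < g) :
    containsK d Λ (fun i => Real.exp (g * ⨆ i, τ i) * Real.exp (τ i)) k := by
  obtain ⟨c, C, hc, hC, hb⟩ := aux_succ_lower Λ hΛ k hk hkd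
  have hs : 0 < succMin d Λ τ k := lt_of_lt_of_le (by positivity) (hb τ h0).1
  rw [div_lt_iff₀ hF, Lk, Real.log_lt_iff_lt_exp hs, aux_succ_eq] at h
  have hne : {lam : ℝ | 0 < lam ∧
      containsK d Λ (fun i => lam * Real.exp (τ i)) k}.Nonempty := by
    by_contra hc
    rw [Set.not_nonempty_iff_eq_empty] at hc
    rw [aux_succ_eq, hc, Real.sInf_empty] at hs
    exact lt_irrefl _ hs
  obtain ⟨lam, hl, hlt⟩ := exists_lt_of_csInf_lt hne h
  exact aux_mono hl.2 fun i => mul_le_mul_of_nonneg_right hlt.le (Real.exp_pos _).le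

theorem aux_supNorm_exp {d : ℕ} (hd : 2 ≤ d) (a : ℝ) (τ : Fin d → ℝ) :
    supNorm (fun i => Real.exp a * Real.exp (τ i)) = Real.exp (a + ⨆ i, τ i) := by
  have : Nonempty (Fin d) := ⟨⟨0, by omega⟩⟩
  unfold supNorm
  obtain ⟨j, hj⟩ := exists_eq_ciSup_of_finite (f := τ)
  apply le_antisymm
  · refine ciSup_le fun i => ?_
    beta_reduce
    rw [← Real.exp_add, abs_of_pos (Real.exp_pos _)]
    exact Real.exp_le_exp.2 (by linarith [aux_Fle τ i])
  · refine le_trans ?_ (aux_Fle (fun i => |Real.exp a * Real.exp (τ i)|) j)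
    rw [← Real.exp_add, abs_of_pos (Real.exp_pos _), hj]

theorem aux_PiProd_exp {d : ℕ} (hd : 2 ≤ d) (a : ℝ) (τ : Fin d → ℝ) (h0 : ∑ i, τ i = 0) :
    PiProd d (fun i => Real.exp a * Real.exp (τ i)) = Real.exp a := by
  have hd' : (d : ℝ) ≠ 0 := by positivity
  unfold PiProd
  have : ∀ i, |Real.exp a * Real.exp (τ i)| ^ ((1 : ℝ) / d)
      = Real.exp ((a + τ i) * ((1 : ℝ) / d)) := by
    intro i
    rw [← Real.exp_add, abs_of_pos (Real.exp_pos _), ← Real.exp_mul]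
  simp_rw [this]
  rw [← Real.exp_sum, ← Finset.sum_mul, Finset.sum_add_distrib, h0]
  congr 1
  simp
  field_simp

theorem aux_repr {d : ℕ} (hd : 2 ≤ d) (v : Fin d → ℝ) (hv : ∀ i, 0 < v i) :
    ∃ (a : ℝ) (τ : Fin d → ℝ), ∑ i, τ i = 0 ∧ v = fun i => Real.exp a * Real.exp (τ i) := by
  have hd' : (d : ℝ) ≠ 0 := by positivity
  refine ⟨(∑ i, Real.log (v i)) / d, fun i => Real.log (v i) - (∑ i, Real.log (v i)) / d, ?_, ?_⟩
  · rw [Finset.sum_sub_distrib]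
    simp
    field_simp
    simp
  · ext i
    rw [← Real.exp_add, add_sub_cancel, Real.exp_log (hv i)]

theorem aux_corr {d : ℕ} (hd : 2 ≤ d) (γ : ℝ) (hγ : -1 < γ) (a : ℝ) (τ : Fin d → ℝ)
    (h0 : ∑ i, τ i = 0) :
    PiProd d (fun i => Real.exp a * Real.exp (τ i))
      = supNorm (fun i => Real.exp a * Real.exp (τ i)) ^ (-γ) ↔ a = -γ / (1 + γ) * ⨆ i, τ i := by
  have h1 : 1 + γ ≠ 0 := by linarith
  rw [aux_supNorm_exp hd, aux_PiProd_exp hd a τ h0, ← Real.exp_mul, Real.exp_eq_exp]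
  constructor
  · intro h
    field_simp
    linarith
  · intro h
    rw [h]
    field_simp
    ring

theorem aux_supNorm_g {d : ℕ} (hd : 2 ≤ d) (γ : ℝ) (hγ : -1 < γ) (τ : Fin d → ℝ) :
    supNorm (fun i => Real.exp (-γ / (1 + γ) * ⨆ i, τ i) * Real.exp (τ i))
      = Real.exp ((⨆ i, τ i) / (1 + γ)) := by
  have h1 : 1 + γ ≠ 0 := by linarith
  rw [aux_supNorm_exp hd]
  congr 1
  field_simp
  ring

theorem aux_memS {d : ℕ} (hd : 2 ≤ d) (Λ : Set (Fin d → ℝ)) (k : ℕ) (γ : ℝ) (hγ : -1 < γ) :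
    (∀ T : ℝ, ∃ v : Fin d → ℝ, (∀ i, 0 < v i) ∧
      PiProd d v = supNorm v ^ (-γ) ∧ T < supNorm v ∧ containsK d Λ v k) ↔
    ∃ᶠ τ in Tfilter d, 0 < (⨆ i, τ i) ∧ ∑ i, τ i = 0 ∧
      containsK d Λ (fun i => Real.exp (-γ / (1 + γ) * ⨆ i, τ i) * Real.exp (τ i)) k := by
  have h1 : 0 < 1 + γ := by linarith
  rw [aux_fr hd]
  constructor
  · intro h M
    obtain ⟨v, hv, hP, hT, hK⟩ := h (Real.exp (max M 0 / (1 + γ)))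
    obtain ⟨a, τ, h0, rfl⟩ := aux_repr hd v hv
    obtain rfl := (aux_corr hd γ hγ a τ h0).1 hP
    rw [aux_supNorm_g hd γ hγ, Real.exp_lt_exp, div_lt_div_iff_of_pos_right h1] at hT
    exact ⟨τ, h0, (le_max_left _ _).trans_lt hT, (le_max_right _ _).trans_lt hT, h0, hK⟩
  · intro h T
    obtain ⟨τ, h0, hM, hF, -, hK⟩ := h ((1 + γ) * T)
    refine ⟨_, fun i => by positivity, (aux_corr hd γ hγ _ τ h0).2 rfl, ?_, hK⟩
    rw [aux_supNorm_g hd γ hγ]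
    have : T < (⨆ i, τ i) / (1 + γ) := by rw [lt_div_iff₀ h1]; linarith
    linarith [Real.add_one_le_exp ((⨆ i, τ i) / (1 + γ))]

theorem aux_memShat {d : ℕ} (hd : 2 ≤ d) (Λ : Set (Fin d → ℝ)) (k : ℕ) (γ : ℝ) (hγ : -1 < γ) :
    (∃ T : ℝ, ∀ v : Fin d → ℝ, (∀ i, 0 < v i) →
      PiProd d v = supNorm v ^ (-γ) → T < supNorm v → containsK d Λ v k) ↔
    ∀ᶠ τ in Tfilter d, 0 < (⨆ i, τ i) → ∑ i, τ i = 0 →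
      containsK d Λ (fun i => Real.exp (-γ / (1 + γ) * ⨆ i, τ i) * Real.exp (τ i)) k := by
  have h1 : 0 < 1 + γ := by linarith
  rw [aux_ev hd]
  constructor
  · rintro ⟨T, h⟩
    refine ⟨(1 + γ) * T, fun τ h0 hM hF _ => ?_⟩
    refine h _ (fun i => by positivity) ((aux_corr hd γ hγ _ τ h0).2 rfl) ?_
    rw [aux_supNorm_g hd γ hγ]
    have : T < (⨆ i, τ i) / (1 + γ) := by rw [lt_div_iff₀ h1]; linarith
    linarith [Real.add_one_le_exp ((⨆ i, τ i) / (1 + γ))]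
  · rintro ⟨M, h⟩
    refine ⟨Real.exp (max M 0 / (1 + γ)), fun v hv hP hT => ?_⟩
    obtain ⟨a, τ, h0, rfl⟩ := aux_repr hd v hv
    obtain rfl := (aux_corr hd γ hγ a τ h0).1 hP
    rw [aux_supNorm_g hd γ hγ, Real.exp_lt_exp, div_lt_div_iff_of_pos_right h1] at hT
    exact h τ h0 ((le_max_left _ _).trans_lt hT) ((le_max_right _ _).trans_lt hT) h0

theorem aux_g (γ : ℝ) (hγ : -1 < γ) : -γ / (1 + γ) = -1 + 1 / (1 + γ) := by
  have h1 : 1 + γ ≠ 0 := by linarith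
  field_simp
  ring

theorem aux_le_iff (γ ψ : ℝ) (hγ : -1 < γ) : ψ ≤ -γ / (1 + γ) ↔ (1 + γ) * (1 + ψ) ≤ 1 := by
  have h1 : 0 < 1 + γ := by linarith
  rw [le_div_iff₀ h1]
  constructor <;> intro h <;> nlinarith

theorem aux_sSup (S : Set ℝ) (ψ : ℝ)
    (h1 : ∀ γ, -1 < γ → γ ∈ S → ψ ≤ -γ / (1 + γ))
    (h2 : ∀ γ, -1 < γ → ψ < -γ / (1 + γ) → γ ∈ S) (γ : ℝ) (hγ : -1 < γ) :
    (γ : EReal) ≤ sSup (Real.toEReal '' S) ↔ ψ ≤ -γ / (1 + γ) := by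
  constructor
  · intro h
    by_contra hc
    rw [aux_le_iff _ _ hγ] at hc
    push Not at hc
    have hp : 0 < 1 + ψ := by
      by_contra hn
      push Not at hn
      nlinarith
    have hlt : 1 / (1 + ψ) < 1 + γ := by rw [div_lt_iff₀ hp]; exact hc
    have hpos : 0 < 1 / (1 + ψ) := by positivity
    have : ((1 / (1 + ψ) - 1 : ℝ) : EReal) < γ := by
      rw [EReal.coe_lt_coe_iff]; linarith
    obtain ⟨_, ⟨γ', hm, rfl⟩, hlt'⟩ := lt_sSup_iff.1 (this.trans_le h)
    rw [EReal.coe_lt_coe_iff] at hlt'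
    have hg' : -1 < γ' := by linarith
    have h3 := (aux_le_iff _ _ hg').1 (h1 γ' hg' hm)
    have : 1 / (1 + ψ) < 1 + γ' := by linarith
    rw [div_lt_iff₀ hp] at this
    linarith
  · intro h
    rw [aux_le_iff _ _ hγ] at h
    refine le_of_forall_lt fun c hc => ?_
    obtain ⟨x, hx1, hx2⟩ := EReal.lt_iff_exists_real_btwn.1 hc
    rw [EReal.coe_lt_coe_iff] at hx2
    refine hx1.trans_le ?_
    obtain ⟨y, hy1, hy2⟩ := exists_between (max_lt hγ hx2)
    have hy1' : -1 < y := (le_max_left _ _).trans_lt hy1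
    have hxy : x < y := (le_max_right _ _).trans_lt hy1
    have hm : y ∈ S := by
      refine h2 y hy1' ?_
      have h1 : 0 < 1 + y := by linarith
      rw [lt_div_iff₀ h1]
      by_cases hp : 0 < 1 + ψ
      · nlinarith
      · push Not at hp
        nlinarith
    exact (EReal.coe_le_coe_iff.2 hxy.le).trans (le_sSup ⟨y, hm, rfl⟩)

theorem aux_top (Ω : EReal)
    (h : ∀ γ : ℝ, -1 < γ → ((γ : EReal) ≤ Ω ↔ (-1 : ℝ) ≤ -γ / (1 + γ))) : Ω = ⊤ := by
  rw [EReal.eq_top_iff_forall_lt]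
  intro y
  have h1 : -1 < max (y + 1) 0 := by linarith [le_max_right (y + 1) 0]
  have := (h _ h1).2 (by rw [aux_le_iff _ _ h1]; norm_num)
  refine lt_of_lt_of_le ?_ this
  rw [EReal.coe_lt_coe_iff]
  linarith [le_max_left (y + 1) 0]

theorem aux_prod (Ω : EReal) (ψ D : ℝ) (hD : 0 < D) (hψ : ψ ≤ D - 1)
    (h : ∀ γ : ℝ, -1 < γ → ((γ : EReal) ≤ Ω ↔ ψ ≤ -γ / (1 + γ))) (a : ℝ) (ha : Ω = a) :
    (1 + a) * (1 + ψ) = 1 := by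
  have hD1 : 0 < 1 / D := by positivity
  have h0 : ((-1 + 1 / D : ℝ) : EReal) ≤ Ω := by
    rw [h _ (by linarith), aux_le_iff _ _ (by linarith)]
    have : (1 + (-1 + 1 / D)) * (1 + ψ) = (1 + ψ) / D := by ring
    rw [this, div_le_one hD]
    linarith
  rw [ha, EReal.coe_le_coe_iff] at h0
  have ha1 : -1 < a := by linarith
  have hle := (aux_le_iff _ _ ha1).1 ((h a ha1).1 ha.ge)
  refine le_antisymm hle ?_
  by_contra hc
  push Not at hc
  obtain ⟨b, hb1, hb2⟩ : ∃ b, a < b ∧ (1 + b) * (1 + ψ) ≤ 1 := by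
    by_cases hp : 0 < 1 + ψ
    · refine ⟨1 / (1 + ψ) - 1, ?_, ?_⟩
      · have : 1 + a < 1 / (1 + ψ) := by rw [lt_div_iff₀ hp]; exact hc
        linarith
      · field_simp
        simp
    · push Not at hp
      exact ⟨a + 1, by linarith, by nlinarith⟩
  have := (h b (by linarith)).2 ((aux_le_iff _ _ (by linarith)).2 hb2)
  rw [ha, EReal.coe_le_coe_iff] at this
  linarith

theorem stmt18 (d : ℕ) (hd : 2 ≤ d) (Λ : Set (Fin d → ℝ))
    (hΛ : IsUnimodularLattice d Λ) (k : ℕ) (hk1 : 1 ≤ k) (hkd : k ≤ d) :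
    (omegaLatHatK d Λ k ≤ omegaLatK d Λ k ∧
      (((-1 + 1 / (d : ℝ) : ℝ)) : EReal) ≤ omegaLatHatK d Λ k) ∧
    (-1 ≤ psiLowF d Λ k ∧ psiLowF d Λ k ≤ psiUpF d Λ k ∧ psiUpF d Λ k ≤ (d : ℝ) - 1) ∧
    (∀ γ : ℝ, -1 < γ →
      (((γ : EReal) ≤ omegaLatK d Λ k ↔ psiLowF d Λ k ≤ -γ / (1 + γ)) ∧
       ((γ : EReal) ≤ omegaLatHatK d Λ k ↔ psiUpF d Λ k ≤ -γ / (1 + γ)))) ∧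
    (∀ a : ℝ, omegaLatK d Λ k = (a : EReal) → (1 + a) * (1 + psiLowF d Λ k) = 1) ∧
    (psiLowF d Λ k = -1 → omegaLatK d Λ k = ⊤) ∧
    (∀ a : ℝ, omegaLatHatK d Λ k = (a : EReal) → (1 + a) * (1 + psiUpF d Λ k) = 1) ∧
    (psiUpF d Λ k = -1 → omegaLatHatK d Λ k = ⊤) := by
  have := aux_neBot hd
  have hd' : (2 : ℝ) ≤ d := by exact_mod_cast hd
  have hB := aux_bounds hd Λ hΛ k hk1 hkd
  have bA : (Tfilter d).IsBoundedUnder (· ≤ ·) (fun τ : Fin d → ℝ => Lk d Λ τ k / ⨆ i, τ i) :=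
    Filter.isBoundedUnder_of_eventually_le ((hB 1 one_pos).mono fun τ h => h.2)
  have bB : (Tfilter d).IsBoundedUnder (· ≥ ·) (fun τ : Fin d → ℝ => Lk d Λ τ k / ⨆ i, τ i) :=
    Filter.isBoundedUnder_of_eventually_ge ((hB 1 one_pos).mono fun τ h => h.1)
  have hpos : ∀ᶠ τ in Tfilter d, 0 < (⨆ i, τ i) ∧ ∑ i, τ i = 0 :=
    (aux_ev hd _).2 ⟨0, fun τ h0 hF => ⟨hF, h0⟩⟩
  have hb1 : -1 ≤ psiLowF d Λ k := by
    refine le_of_forall_pos_sub_le fun ε hε => ?_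
    exact Filter.le_liminf_of_le bA.isCoboundedUnder_ge ((hB ε hε).mono fun τ h => h.1)
  have hb2 : psiLowF d Λ k ≤ psiUpF d Λ k := Filter.liminf_le_limsup bA bB
  have hb3 : psiUpF d Λ k ≤ (d : ℝ) - 1 := by
    refine le_of_forall_pos_le_add fun ε hε => ?_
    exact Filter.limsup_le_of_le bB.isCoboundedUnder_le ((hB ε hε).mono fun τ h => h.2)
  have hc1 : ∀ γ : ℝ, -1 < γ →
      ((γ : EReal) ≤ omegaLatK d Λ k ↔ psiLowF d Λ k ≤ -γ / (1 + γ)) := by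
    refine aux_sSup _ _ (fun γ hγ hm => ?_) (fun γ hγ hlt => ?_)
    · rw [Set.mem_ofPred_eq, aux_memS hd Λ k γ hγ] at hm
      refine Filter.liminf_le_of_frequently_le (hm.mono fun τ h => ?_) bB
      exact aux_contains_le Λ hΛ k hk1 hkd τ h.2.1 h.1 _ h.2.2
    · rw [Set.mem_ofPred_eq, aux_memS hd Λ k γ hγ]
      have := Filter.frequently_lt_of_liminf_lt bA.isCoboundedUnder_ge hlt
      refine (this.and_eventually hpos).mono fun τ h => ⟨h.2.1, h.2.2, ?_⟩
      exact aux_contains_of_lt Λ hΛ k hk1 hkd τ h.2.2 h.2.1 _ h.1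
  have hc2 : ∀ γ : ℝ, -1 < γ →
      ((γ : EReal) ≤ omegaLatHatK d Λ k ↔ psiUpF d Λ k ≤ -γ / (1 + γ)) := by
    refine aux_sSup _ _ (fun γ hγ hm => ?_) (fun γ hγ hlt => ?_)
    · rw [Set.mem_ofPred_eq, aux_memShat hd Λ k γ hγ] at hm
      refine Filter.limsup_le_of_le bB.isCoboundedUnder_le ((hm.and hpos).mono fun τ h => ?_)
      exact aux_contains_le Λ hΛ k hk1 hkd τ h.2.2 h.2.1 _ (h.1 h.2.1 h.2.2)
    · rw [Set.mem_ofPred_eq, aux_memShat hd Λ k γ hγ]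
      have := Filter.eventually_lt_of_limsup_lt hlt bA
      refine this.mono fun τ h hF h0 => ?_
      exact aux_contains_of_lt Λ hΛ k hk1 hkd τ h0 hF _ h
  have hD1 : 0 < 1 / (d : ℝ) := by positivity
  have hlow : ∀ ψ : ℝ, ψ ≤ (d : ℝ) - 1 →
      ψ ≤ -(-1 + 1 / (d : ℝ)) / (1 + (-1 + 1 / (d : ℝ))) := by
    intro ψ hψ
    rw [aux_le_iff _ _ (by linarith)]
    have : (1 + (-1 + 1 / (d : ℝ))) * (1 + ψ) = (1 + ψ) / d := by ring
    rw [this, div_le_one (by linarith)]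
    linarith
  have ha2 : (((-1 + 1 / (d : ℝ) : ℝ)) : EReal) ≤ omegaLatHatK d Λ k :=
    (hc2 _ (by linarith)).2 (hlow _ hb3)
  have ha2' : (((-1 + 1 / (d : ℝ) : ℝ)) : EReal) ≤ omegaLatK d Λ k :=
    (hc1 _ (by linarith)).2 (hlow _ (hb2.trans hb3))
  have ha1 : omegaLatHatK d Λ k ≤ omegaLatK d Λ k := by
    refine le_of_forall_lt fun c hc => ?_
    obtain ⟨x, hx1, hx2⟩ := EReal.lt_iff_exists_real_btwn.1 hc
    refine hx1.trans_le ?_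
    by_cases hx : -1 < x
    · exact (hc1 x hx).2 (hb2.trans ((hc2 x hx).1 hx2.le))
    · push Not at hx
      exact (EReal.coe_le_coe_iff.2 (by linarith)).trans ha2'
  refine ⟨⟨ha1, ha2⟩, ⟨hb1, hb2, hb3⟩, fun γ hγ => ⟨hc1 γ hγ, hc2 γ hγ⟩, ?_, ?_, ?_, ?_⟩
  · exact aux_prod _ _ d (by linarith) (hb2.trans hb3) hc1
  · intro h
    rw [h] at hc1
    exact aux_top _ hc1
  · exact aux_prod _ _ d (by linarith) hb3 hc2
  · intro h
    rw [h] at hc2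
    exact aux_top _ hc2
end
end
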